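/- arXiv:0811.3180 — 7 statements merged into one kernel-verified Lean document; each statement's English description precedes it below -/
import Mathlib

section
/- Let V be a real vector space of dimension m ≥ 3 and let A be a generalized algebraic curvature operator on V. Then there exists a smooth torsion-free connection ∇ on ℝ^m ≅ V (given by smooth symmetric Christoffel symbols) whose curvature operator at the origin equals A, i.e. R^∇_0(e_i,e_j)e_k = A(e_i,e_j)e_k for the standard basis {e_i}. -/
noncomputable section

/-- The curvature operator `R_{ijk}{}^l` at `P` of the torsion-free connection on `ℝ^m`
with Christoffel symbols `Γ`:
`R_{ijk}{}^l = ∂_{x_i}Γ_{jk}{}^l - ∂_{x_j}Γ_{ik}{}^l + Γ_{in}{}^l Γ_{jk}{}^n - Γ_{jn}{}^l Γ_{ik}{}^n`. -/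
def curv {m : ℕ} (Γ : (Fin m → ℝ) → Fin m → Fin m → Fin m → ℝ) (P : Fin m → ℝ)
    (i j k l : Fin m) : ℝ :=
  fderiv ℝ (fun x => Γ x j k l) P (Pi.single i 1)
    - fderiv ℝ (fun x => Γ x i k l) P (Pi.single j 1)
    + ∑ n, (Γ P i n l * Γ P j k n - Γ P j n l * Γ P i k n)

/-!
Take Christoffel symbols that are linear in the coordinates,
`Γ_{jk}{}^l(x) = (1/3) ∑ w, x_w (A_{wjk}{}^l + A_{wkj}{}^l)`.
They are symmetric in `j, k` and vanish at the origin, so the quadratic terms drop out and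
`R_{ijk}{}^l(0) = (1/3) (A_{ijk}{}^l + A_{ikj}{}^l - A_{jik}{}^l - A_{jki}{}^l)`.
By antisymmetry this is `(1/3) (2 A_{ijk}{}^l - A_{kij}{}^l - A_{jki}{}^l)`, which equals
`A_{ijk}{}^l` by the Bianchi identity.
-/

theorem fderiv_sum_mul_single {m : ℕ} (c : Fin m → ℝ) (P : Fin m → ℝ) (i : Fin m) :
    fderiv ℝ (fun x : Fin m → ℝ => ∑ w, x w * c w) P (Pi.single i 1) = c i := by
  have h : HasFDerivAt (fun x : Fin m → ℝ => ∑ w, x w * c w)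
      (∑ w, c w • (ContinuousLinearMap.proj w : (Fin m → ℝ) →L[ℝ] ℝ)) P :=
    HasFDerivAt.fun_sum fun w _ => (hasFDerivAt_apply w P).mul_const (c w)
  rw [h.fderiv]
  simp [Pi.single_apply]

/-- **Theorem 1.1.** Every generalized algebraic curvature operator `A` on `V ≅ ℝ^m`
(`m ≥ 3`) is geometrically realizable: there is a smooth torsion-free connection `∇` on `ℝ^m`
whose curvature operator at the origin equals `A`. -/
theorem geometric_realization_of_generalized_curvature
    (m : ℕ) (hm : 3 ≤ m) (A : Fin m → Fin m → Fin m → Fin m → ℝ)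
    (hanti : ∀ i j k l, A i j k l = - A j i k l)
    (hbianchi : ∀ i j k l, A i j k l + A j k i l + A k i j l = 0) :
    ∃ Γ : (Fin m → ℝ) → Fin m → Fin m → Fin m → ℝ,
      (∀ i j k, ContDiff ℝ (⊤ : ℕ∞) fun x => Γ x i j k) ∧
      (∀ x i j k, Γ x i j k = Γ x j i k) ∧
      (∀ i j k l, curv Γ 0 i j k l = A i j k l) := by
  refine ⟨fun x j k l => ∑ w, x w * ((A w j k l + A w k j l) / 3), ?_, ?_, ?_⟩
  · intro i j k
    fun_prop
  · intro x i j k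
    simp only [add_comm]
  · intro i j k l
    simp only [curv, fderiv_sum_mul_single, Pi.zero_apply, zero_mul, Finset.sum_const_zero,
      sub_self, add_zero]
    linarith [hanti i j k l, hanti i k j l, hbianchi i j k l]
end
end

section
/- Let A ∈ 𝔄(ℝ^m) have components A_{ijk}^l defined by A(e_i,e_j)e_k = A_{ijk}^l e_l. Define Christoffel symbols Γ_{uv}^l(x) := (1/3)(A_{wuv}^l + A_{wvu}^l)x^w (summation over w). Then Γ is symmetric in (u,v) (so the associated connection is torsion free), and the curvature operator of this connection at the origin satisfies R_0(e_i,e_j)e_k = A_{ijk}^l e_l, i.e. it equals A. -/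
/-!
The symbols `Γ` vanish at the origin, so the quadratic terms of the curvature drop out there, and
`Γ` is linear, so its partial derivatives are its coefficients (`fderiv_canonical_christoffel`).
Hence `3 R_{ijk}^l = A_{ijk}^l + A_{ikj}^l - A_{jik}^l - A_{jki}^l`. By antisymmetry this is
`2 A_{ijk}^l - A_{kij}^l - A_{jki}^l`, which is `3 A_{ijk}^l` by the Bianchi identity.
-/

noncomputable section

/-- The canonical Christoffel symbols are linear in the position, so their partial derivatives
are their (constant) coefficients. -/
theorem fderiv_canonical_christoffel {m : ℕ} (A : Fin m → Fin m → Fin m → Fin m → ℝ)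
    (Γ : (Fin m → ℝ) → Fin m → Fin m → Fin m → ℝ)
    (hΓ : ∀ x u v l, Γ x u v l = (1 / 3) * ∑ w, (A w u v l + A w v u l) * x w)
    (P : Fin m → ℝ) (i u v l : Fin m) :
    fderiv ℝ (fun x => Γ x u v l) P (Pi.single i 1) = (1 / 3) * (A i u v l + A i v u l) := by
  have h : HasFDerivAt (fun x => Γ x u v l)
      ((1 / 3 : ℝ) • ∑ w, (A w u v l + A w v u l) •
        (ContinuousLinearMap.proj w : (Fin m → ℝ) →L[ℝ] ℝ)) P := by
    simp only [hΓ]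
    exact (HasFDerivAt.fun_sum fun w _ => (hasFDerivAt_apply w P).const_mul _).const_mul _
  rw [h.fderiv]
  simp [Pi.single_apply]

/-- **Lemma 2.1.** If `A ∈ 𝔄(ℝ^m)` and `Γ_{uv}{}^l(x) := (1/3)(A_{wuv}{}^l + A_{wvu}{}^l)x^w`,
then `Γ` is symmetric in `(u,v)` (so the associated connection is torsion free)
and the curvature of the associated connection at the origin equals `A`. -/
theorem curvature_of_canonical_christoffel_symbols
    (m : ℕ) (A : Fin m → Fin m → Fin m → Fin m → ℝ)
    (hanti : ∀ i j k l, A i j k l = - A j i k l)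
    (hbianchi : ∀ i j k l, A i j k l + A j k i l + A k i j l = 0)
    (Γ : (Fin m → ℝ) → Fin m → Fin m → Fin m → ℝ)
    (hΓ : ∀ x u v l, Γ x u v l = (1 / 3) * ∑ w, (A w u v l + A w v u l) * x w) :
    (∀ x u v l, Γ x u v l = Γ x v u l) ∧
    (∀ i j k l, curv Γ 0 i j k l = A i j k l) := by
  refine ⟨fun x u v l => by simp only [hΓ, add_comm], fun i j k l => ?_⟩
  have hzero : ∀ u v w, Γ 0 u v w = 0 := fun u v w => by simp [hΓ]
  simp only [curv, fderiv_canonical_christoffel A Γ hΓ, hzero, mul_zero, sub_zero,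
    Finset.sum_const_zero, add_zero]
  linarith [hanti j i k l, hanti i k j l, hbianchi i j k l]
end
end

section
/- Let V be a real vector space of finite dimension m and let Θ be a bilinear form on V. Then the Ricci tensor of H(Θ) satisfies ρ(H(Θ))(y,z) = (1-m)Θ_s(y,z) - (1+m)Θ_a(y,z) for all y,z ∈ V, where Θ_s and Θ_a are the symmetric and antisymmetric parts of Θ. -/
noncomputable section

/-- The Ricci tensor of `H(Θ)`:  `ρ(H(Θ))(y,z) = Tr{w ↦ H(Θ)(w,y)z}`, where
`H(Θ)(w,y)z = Θ(w,y)•z - Θ(y,w)•z + Θ(w,z)•y - Θ(y,z)•w`.  The linear map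
`w ↦ H(Θ)(w,y)z` is `(Θ.flip y).smulRight z - (Θ y).smulRight z + (Θ.flip z).smulRight y
- Θ y z • id`. -/
theorem ricci_of_H
    {V : Type*} [AddCommGroup V] [Module ℝ V] [FiniteDimensional ℝ V]
    (m : ℕ) (hdim : Module.finrank ℝ V = m)
    (Θ : V →ₗ[ℝ] V →ₗ[ℝ] ℝ) (y z : V) :
    LinearMap.trace ℝ V
        ((Θ.flip y).smulRight z - (Θ y).smulRight z + (Θ.flip z).smulRight y
          - Θ y z • (LinearMap.id : V →ₗ[ℝ] V))
      = (1 - (m : ℝ)) * ((Θ y z + Θ z y) / 2)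
        - (1 + (m : ℝ)) * ((Θ y z - Θ z y) / 2) := by
  -- The rank-one map `w ↦ f w • x` has trace `f x`, so the trace is `Θ z y - m * Θ y z`.
  simp only [map_add, map_sub, map_smul, LinearMap.trace_smulRight, LinearMap.trace_id,
    LinearMap.flip_apply, smul_eq_mul, hdim]
  ring
end
end

section
/- Let V = ℝ^m with m ≥ 3 and let A ∈ 𝔄(V) be Ricci symmetric, i.e. ρ(A)(x,y) = ρ(A)(y,x) for all x,y. Then there exists a smooth torsion-free connection ∇ defined on a neighborhood of 0 in ℝ^m whose curvature at 0 equals A and whose Ricci tensor is symmetric at every point of that neighborhood. -/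
/-!
The connection is taken with Christoffel symbols linear in the coordinates,
`Γ_{jk}^l(x) = ∑ i, x_i (A_{ijk}^l + A_{ikj}^l) / 3`, on all of `ℝ^m`. The coefficients are
symmetric in `j, k`, and by the Bianchi identity their skew-symmetrization in `i, j` is `A`. Hence
at every point `P`
`R_{ijk}^l(P) = A_{ijk}^l + (terms quadratic in Γ(P))` (`curv_linGamma`),
and the quadratic terms vanish at the origin. For a torsion-free connection the quadratic
contribution to the Ricci tensor is always symmetric (`quadratic_ricci_symm`), so the skew part of
the Ricci tensor is constant, equal to that of `A`, which is zero. No differential equation has to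
be solved.
-/

noncomputable section

/-- The Ricci tensor `ρ_{jk} = R_{ijk}{}^i` of a curvature tensor given in components. -/
def ricC {m : ℕ} (R : Fin m → Fin m → Fin m → Fin m → ℝ) (j k : Fin m) : ℝ :=
  ∑ i, R i j k i

/-- Christoffel symbols `Γ_{jk}^l(x) = ∑ i, x_i (A_{ijk}^l + A_{ikj}^l) / 3`, linear in `x`. -/
def linGamma {m : ℕ} (A : Fin m → Fin m → Fin m → Fin m → ℝ) (x : Fin m → ℝ)
    (j k l : Fin m) : ℝ :=
  ∑ i, x i * ((A i j k l + A i k j l) / 3)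

lemma linGamma_symm {m : ℕ} (A : Fin m → Fin m → Fin m → Fin m → ℝ) (x : Fin m → ℝ)
    (j k l : Fin m) : linGamma A x j k l = linGamma A x k j l := by
  simp only [linGamma, add_comm]

lemma contDiff_linGamma {m : ℕ} (A : Fin m → Fin m → Fin m → Fin m → ℝ) (j k l : Fin m) :
    ContDiff ℝ (⊤ : ℕ∞) (fun x => linGamma A x j k l) := by
  unfold linGamma
  fun_prop

lemma fderiv_linGamma {m : ℕ} (A : Fin m → Fin m → Fin m → Fin m → ℝ) (P : Fin m → ℝ)
    (i j k l : Fin m) :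
    fderiv ℝ (fun x => linGamma A x j k l) P (Pi.single i 1) = (A i j k l + A i k j l) / 3 := by
  have h : HasFDerivAt (fun x => linGamma A x j k l)
      (∑ n, ((A n j k l + A n k j l) / 3) •
        (ContinuousLinearMap.proj n : (Fin m → ℝ) →L[ℝ] ℝ)) P := by
    unfold linGamma
    exact HasFDerivAt.fun_sum fun n _ => (hasFDerivAt_apply n P).mul_const _
  rw [h.fderiv]
  simp [Pi.single_apply]

lemma curv_linGamma {m : ℕ} (A : Fin m → Fin m → Fin m → Fin m → ℝ)
    (hanti : ∀ i j k l, A i j k l = - A j i k l)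
    (hbianchi : ∀ i j k l, A i j k l + A j k i l + A k i j l = 0)
    (P : Fin m → ℝ) (i j k l : Fin m) :
    curv (linGamma A) P i j k l = A i j k l +
      ∑ n, (linGamma A P i n l * linGamma A P j k n - linGamma A P j n l * linGamma A P i k n) := by
  rw [curv, fderiv_linGamma, fderiv_linGamma]
  linarith [hbianchi i j k l, hanti i j k l, hanti i k j l]

/-- The terms of the Ricci tensor quadratic in `Γ` are
`Γ_{in}^i Γ_{jk}^n - Γ_{jn}^i Γ_{ik}^n`. For `Γ` symmetric in its lower indices, the first is
symmetric in `j, k`, and so is the second after exchanging the two summation indices. -/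
lemma quadratic_ricci_symm {m : ℕ} (G : Fin m → Fin m → Fin m → ℝ)
    (hG : ∀ i j k, G i j k = G j i k) (j k : Fin m) :
    ∑ i, ∑ n, (G i n i * G j k n - G j n i * G i k n) =
      ∑ i, ∑ n, (G i n i * G k j n - G k n i * G i j n) := by
  simp only [Finset.sum_sub_distrib]
  congr 1
  · simp only [hG j k]
  · rw [Finset.sum_comm]
    refine Finset.sum_congr rfl fun i _ => Finset.sum_congr rfl fun n _ => ?_
    rw [hG j i n, hG n k i, mul_comm]


/-- **Theorem 1.4 (1).** A Ricci symmetric generalized algebraic curvature operator on ℝ^m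
(m ≥ 3) is geometrically realizable by a torsion-free connection, defined on a neighborhood
of the origin, whose Ricci tensor is symmetric at every point of that neighborhood, and
whose curvature at the origin equals A. -/
theorem ricci_symmetric_realization
    (m : ℕ) (hm : 3 ≤ m) (A : Fin m → Fin m → Fin m → Fin m → ℝ)
    (hanti : ∀ i j k l, A i j k l = - A j i k l)
    (hbianchi : ∀ i j k l, A i j k l + A j k i l + A k i j l = 0)
    (hricci : ∀ i j, ricC A i j = ricC A j i) :
    ∃ U : Set (Fin m → ℝ), IsOpen U ∧ (0 : Fin m → ℝ) ∈ U ∧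
      ∃ Γ : (Fin m → ℝ) → Fin m → Fin m → Fin m → ℝ,
        (∀ i j k, ContDiffOn ℝ (⊤ : ℕ∞) (fun x => Γ x i j k) U) ∧
        (∀ x ∈ U, ∀ i j k, Γ x i j k = Γ x j i k) ∧
        (∀ i j k l, curv Γ 0 i j k l = A i j k l) ∧
        (∀ P ∈ U, ∀ j k, ricC (curv Γ P) j k = ricC (curv Γ P) k j) := by
  refine ⟨Set.univ, isOpen_univ, Set.mem_univ _, linGamma A,
    fun i j k => (contDiff_linGamma A i j k).contDiffOn,
    fun x _ i j k => linGamma_symm A x i j k, fun i j k l => ?_, fun P _ j k => ?_⟩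
  · rw [curv_linGamma A hanti hbianchi]
    simp [linGamma]
  · have h := hricci j k
    simp only [ricC] at h ⊢
    simp only [curv_linGamma A hanti hbianchi, Finset.sum_add_distrib]
    rw [h, quadratic_ricci_symm (linGamma A P) (linGamma_symm A P) j k]
end
end

section
/- Let V = ℝ^m with m ≥ 3 and let A ∈ 𝔄(V) be Ricci antisymmetric, i.e. ρ(A)(x,y) = -ρ(A)(y,x) for all x,y. Then there exists a smooth torsion-free connection ∇ defined on a neighborhood of 0 in ℝ^m whose curvature at 0 equals A and whose Ricci tensor is antisymmetric at every point of that neighborhood. -/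
/-!
The connection with linear Christoffel symbols
`L_{jk}^l(x) = (1/3) ∑ i, (A_{ijk}^l + A_{ikj}^l) x_i` has the right curvature at the origin, and the part of its curvature that is linear in `L` equals `A` everywhere; only the
quadratic terms spoil the antisymmetry of the Ricci tensor.  Since `m ≥ 3`, an index
`c j k = c k j` different from both `j` and `k` can be chosen (`exists_third_index`).  Put
`Γ_{jk}^l = L_{jk}^l + δ_{l, c j k} w_{jk}`, where `w` is the symmetrization of unknown functions
`u_{jk}`.  The correction does not change the traces `Γ_{ik}^i`, so its only first-order
contribution to the Ricci tensor is `∂_{c j k} w_{jk}`, and it suffices to solve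

  `∂_{c j k} u_{jk} = - ∑ i n, (Γ_{in}^i Γ_{jk}^n - Γ_{jn}^i Γ_{ik}^n)`,  `u_{jk} = 0` on
  `{x | x_{c j k} = 0}`,

whose right-hand side is a polynomial in `x` and `u` without constant or linear terms.  The first
derivatives of `u` vanish at the origin, so the curvature there is still `A`.

This is a system in which each unknown is differentiated in a single direction (lemma `goursat`),
equivalently `u_a(x) = ∫ Q_a(.., u)`, the integral running over `[0, x_{c a}]` in the variable
`c a`.  A smooth solution comes from the implicit function theorem: the
rescaled function `s ↦ u (x₁ s₁, …, x_m s_m)` on the cube `[0,1]^m` is an unknown in a Banach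
algebra of continuous functions, and it satisfies an equation `goursatMap c Q (x, v) = 0` that is
polynomial in `(x, v)` and reduces to `v = 0` at `x = 0`.  Its solution `ψ x` is therefore analytic
in `x`.  Local uniqueness shows that the solutions for different `x` are rescalings of each other
(`exists_scaling_family`), so that `u x = ψ x (1, …, 1)` solves the integral equation.
-/

noncomputable section

namespace RicciRealization
open scoped Topology ContDiff unitInterval
open MvPolynomial

/-! ### Integration on the cube -/

/-- The cube `[0,1]^m`. -/
abbrev Cube (m : ℕ) := Fin m → I

/-- The `j`-th coordinate as a continuous function on the cube. -/
def coordFn {m : ℕ} (j : Fin m) : C(Cube m, ℝ) := ⟨fun s => (s j : ℝ), by fun_prop⟩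

/-- The point `(x₁ s₁, …, x_m s_m)`. -/
def dil {m : ℕ} (x : Fin m → ℝ) (s : Cube m) : Fin m → ℝ := fun j => x j * (s j : ℝ)

/-- The point `s` with its `c`-th coordinate multiplied by `τ`; values of `τ` outside `[0,1]` are
clamped to that interval. -/
def ray {m : ℕ} (c : Fin m) (τ : ℝ) (s : Cube m) : Cube m :=
  Function.update s c (Set.projIcc (0 : ℝ) 1 zero_le_one τ * s c)

lemma continuous_ray {m : ℕ} (c : Fin m) :
    Continuous (fun p : Cube m × ℝ => ray c p.2 p.1) := by
  unfold ray
  refine Continuous.update continuous_fst c ?_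
  exact (continuous_projIcc.comp continuous_snd).mul ((continuous_apply c).comp continuous_fst)

/-- Integration in the `c`-th variable from `0`, `f ↦ s_c ∫₀¹ f(.., τ s_c, ..) dτ`, as a bounded
operator on the continuous functions on the cube. -/
def prim {m : ℕ} (c : Fin m) : C(Cube m, ℝ) →L[ℝ] C(Cube m, ℝ) :=
  LinearMap.mkContinuous
    { toFun := fun f => ⟨fun s => (s c : ℝ) * ∫ τ in (0 : ℝ)..1, f (ray c τ s), by
        refine Continuous.mul (by fun_prop) ?_
        exact intervalIntegral.continuous_parametric_intervalIntegral_of_continuous'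
          (f := fun s τ => f (ray c τ s)) (f.continuous.comp (continuous_ray c)) 0 1⟩
      map_add' := fun f g => by
        ext s
        have h (f : C(Cube m, ℝ)) : IntervalIntegrable (fun τ => f (ray c τ s))
            MeasureTheory.volume 0 1 :=
          (f.continuous.comp ((continuous_ray c).comp
            (continuous_const.prodMk continuous_id))).intervalIntegrable _ _
        simp [intervalIntegral.integral_add (h f) (h g), mul_add]
      map_smul' := fun r f => by
        ext s
        simp [mul_left_comm] }
    1 (fun f => by
      rw [one_mul, ContinuousMap.norm_le _ (norm_nonneg f)]
      intro s
      have h1 : ‖∫ τ in (0 : ℝ)..1, f (ray c τ s)‖ ≤ ‖f‖ := by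
        simpa using intervalIntegral.norm_integral_le_of_norm_le_const
          (a := (0 : ℝ)) (b := 1) (f := fun τ => f (ray c τ s)) (C := ‖f‖)
          (fun τ _ => f.norm_coe_le_norm _)
      have h2 : ‖(s c : ℝ)‖ ≤ 1 := by
        rw [Real.norm_eq_abs, abs_of_nonneg (s c).2.1]; exact (s c).2.2
      calc ‖(s c : ℝ) * ∫ τ in (0 : ℝ)..1, f (ray c τ s)‖
          = ‖(s c : ℝ)‖ * ‖∫ τ in (0 : ℝ)..1, f (ray c τ s)‖ := norm_mul _ _
        _ ≤ 1 * ‖f‖ := mul_le_mul h2 h1 (norm_nonneg _) zero_le_one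
        _ = ‖f‖ := one_mul _)

lemma prim_apply {m : ℕ} (c : Fin m) (f : C(Cube m, ℝ)) (s : Cube m) :
    prim c f s = (s c : ℝ) * ∫ τ in (0 : ℝ)..1, f (ray c τ s) := rfl

lemma mul_ray {m : ℕ} (c : Fin m) (τ : ℝ) (s t : Cube m) : s * ray c τ t = ray c τ (s * t) := by
  funext j
  by_cases h : j = c
  · subst h; simp [ray, mul_left_comm]
  · simp [ray, h]

/-! ### Smoothness of polynomial maps -/

lemma contDiff_aeval {E B κ : Type*} [NormedAddCommGroup E] [NormedSpace ℝ E]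
    [NormedCommRing B] [NormedAlgebra ℝ B] {f : E → κ → B} {n : WithTop ℕ∞}
    (hf : ∀ i, ContDiff ℝ n (fun x => f x i)) (Q : MvPolynomial κ ℝ) :
    ContDiff ℝ n (fun x => aeval (f x) Q) := by
  induction Q using MvPolynomial.induction_on with
  | C a => simpa using contDiff_const
  | add p q hp hq => simpa using hp.add hq
  | mul_X p i hp => simpa using hp.mul (hf i)

lemma contDiffOn_eval {E κ : Type*} [NormedAddCommGroup E] [NormedSpace ℝ E] {U : Set E}
    {f : E → κ → ℝ} {n : WithTop ℕ∞}
    (hf : ∀ i, ContDiffOn ℝ n (fun x => f x i) U) (Q : MvPolynomial κ ℝ) :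
    ContDiffOn ℝ n (fun x => eval (f x) Q) U := by
  induction Q using MvPolynomial.induction_on with
  | C a => simpa using contDiffOn_const
  | add p q hp hq => simpa using hp.add hq
  | mul_X p i hp => simpa using hp.mul (hf i)

lemma aeval_continuousMap_apply {K κ : Type*} [TopologicalSpace K] (f : κ → C(K, ℝ))
    (Q : MvPolynomial κ ℝ) (s : K) : aeval f Q s = eval (fun i => f i s) Q := by
  induction Q using MvPolynomial.induction_on with
  | C a => simp
  | add p q hp hq => simp [hp, hq]
  | mul_X p i hp => simp [hp]

/-! ### The rescaled integral equation -/

/-- The map whose zeros `(x, v)` are the solutions of the integral equation for `u`, rescaled to the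
cube by `v s = u (dil x s)`.  In `Q a`, the variables `Sum.inl j` stand for the coordinates and
`Sum.inr b` for the unknowns. -/
def goursatMap {m : ℕ} {ι : Type*} (c : ι → Fin m)
    (Q : ι → MvPolynomial (Fin m ⊕ ι) ℝ) (p : (Fin m → ℝ) × (ι → C(Cube m, ℝ))) :
    ι → C(Cube m, ℝ) := fun a =>
  p.2 a - p.1 (c a) • prim (c a) (aeval (Sum.elim (fun j => p.1 j • coordFn j) p.2) (Q a))

/-- The functions `t ↦ v_a (s * t)`, that is, `v` rescaled by `s`. -/
def precomp {m : ℕ} {ι : Type*} (s : Cube m) (v : ι → C(Cube m, ℝ)) : ι → C(Cube m, ℝ) :=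
  fun a => (v a).comp ⟨fun t => s * t, by fun_prop⟩

lemma goursatMap_apply {m : ℕ} {ι : Type*} (c : ι → Fin m)
    (Q : ι → MvPolynomial (Fin m ⊕ ι) ℝ) (x : Fin m → ℝ) (v : ι → C(Cube m, ℝ)) (a : ι)
    (s : Cube m) :
    goursatMap c Q (x, v) a s = v a s - x (c a) * ((s (c a) : ℝ) * ∫ τ in (0 : ℝ)..1,
      eval (Sum.elim (dil x (ray (c a) τ s)) (fun b => v b (ray (c a) τ s))) (Q a)) := by
  simp only [goursatMap, ContinuousMap.sub_apply, ContinuousMap.smul_apply, prim_apply,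
    aeval_continuousMap_apply, smul_eq_mul]
  congr! 8 with τ
  rename_i i
  cases i <;> simp [dil, coordFn]

/-- The integral equation is invariant under simultaneous rescaling of the base point and of the
unknown. -/
lemma goursatMap_precomp {m : ℕ} {ι : Type*} (c : ι → Fin m)
    (Q : ι → MvPolynomial (Fin m ⊕ ι) ℝ) (x : Fin m → ℝ) (v : ι → C(Cube m, ℝ)) (s : Cube m) :
    goursatMap c Q (dil x s, precomp s v) = precomp s (goursatMap c Q (x, v)) := by
  have hd : ∀ t, dil (dil x s) t = dil x (s * t) := by
    intro t; funext j; simp [dil, mul_assoc]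
  ext a t
  rw [goursatMap_apply]
  simp only [precomp, ContinuousMap.comp_apply, ContinuousMap.coe_mk, goursatMap_apply, mul_ray, hd]
  simp [dil, mul_assoc]

lemma contDiff_goursatMap {m : ℕ} {ι : Type*} [Fintype ι] (c : ι → Fin m)
    (Q : ι → MvPolynomial (Fin m ⊕ ι) ℝ) : ContDiff ℝ ω (goursatMap c Q) := by
  rw [contDiff_pi]
  intro a
  unfold goursatMap
  have h2 : ∀ b, ContDiff ℝ ω (fun p : (Fin m → ℝ) × (ι → C(Cube m, ℝ)) => p.2 b) := fun b =>
    (contDiff_pi.1 contDiff_snd) b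
  have h1 : ∀ j, ContDiff ℝ ω (fun p : (Fin m → ℝ) × (ι → C(Cube m, ℝ)) => p.1 j) := fun j =>
    (contDiff_pi.1 contDiff_fst) j
  refine (h2 a).sub ((h1 (c a)).smul ?_)
  refine (prim (c a)).contDiff.comp (contDiff_aeval ?_ _)
  rintro (j | b)
  · exact (h1 j).smul contDiff_const
  · simpa only [Sum.elim_inr] using h2 b

/-- For small `x` the rescaled equation has a solution `ψ x` that is analytic in `x` and compatible
with rescaling. -/
lemma exists_scaling_family {m : ℕ} {ι : Type*} [Fintype ι] (c : ι → Fin m)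
    (Q : ι → MvPolynomial (Fin m ⊕ ι) ℝ) :
    ∃ δ > 0, ∃ ψ : (Fin m → ℝ) → ι → C(Cube m, ℝ),
      ContDiffOn ℝ ω ψ (Metric.ball 0 δ) ∧
      ∀ x ∈ Metric.ball 0 δ, goursatMap c Q (x, ψ x) = 0 ∧ ∀ s, ψ (dil x s) = precomp s (ψ x) := by
  have h0 : ∀ v, goursatMap c Q ((0 : Fin m → ℝ), v) = v := by
    intro v; funext a; simp [goursatMap]
  have hcd : ContDiffAt ℝ ω (goursatMap c Q) (0 : (Fin m → ℝ) × (ι → C(Cube m, ℝ))) :=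
    (contDiff_goursatMap c Q).contDiffAt
  have hω : (ω : WithTop ℕ∞) ≠ 0 := by simp
  have hinv : (fderiv ℝ (goursatMap c Q) 0 ∘L
      .inr ℝ (Fin m → ℝ) (ι → C(Cube m, ℝ))).IsInvertible := by
    have h1 : HasFDerivAt (fun v => goursatMap c Q ((0 : Fin m → ℝ), v))
        (fderiv ℝ (goursatMap c Q) 0 ∘L .inr ℝ (Fin m → ℝ) (ι → C(Cube m, ℝ))) 0 := by
      have := (hcd.differentiableAt hω).hasFDerivAt
      exact HasFDerivAt.comp (g := goursatMap c Q) (0 : ι → C(Cube m, ℝ)) this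
        (ContinuousLinearMap.inr ℝ (Fin m → ℝ) (ι → C(Cube m, ℝ))).hasFDerivAt
    simp only [h0] at h1
    rw [h1.unique (hasFDerivAt_id _)]
    exact ⟨.refl _ _, rfl⟩
  have hF0 : goursatMap c Q 0 = 0 := h0 0
  have e1 := hcd.eventually_apply_eq_iff_implicitFunction hω hinv
  have e2 := hcd.contDiffAt_implicitFunction hω hinv
  have e3 := hcd.eventually_apply_implicitFunction hω hinv
  have e4 := hcd.implicitFunction_apply_self hω hinv
  set ψ := hcd.implicitFunction hω hinv
  rw [hF0] at e1 e3
  obtain ⟨ε, hε, e1⟩ := Metric.eventually_nhds_iff.1 e1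
  have e5 : ∀ᶠ x in 𝓝 (0 : Fin m → ℝ), ‖ψ x‖ < ε := by
    have := e2.continuousAt.norm.tendsto
    refine this.eventually_lt_const ?_
    rw [e4]; simpa using hε
  have e6 : ∀ᶠ x in 𝓝 (0 : Fin m → ℝ), ContDiffAt ℝ ω ψ x := e2.eventually (by simp)
  have e7 : ∀ᶠ x in 𝓝 (0 : Fin m → ℝ), ‖x‖ < ε := by
    exact (continuous_norm.tendsto' 0 0 norm_zero).eventually_lt_const hε
  obtain ⟨δ, hδ, H⟩ := Metric.eventually_nhds_iff.1 (e3.and (e5.and (e6.and e7)))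
  refine ⟨δ, hδ, ψ, fun x hx => (H hx).2.2.1.contDiffWithinAt, fun x hx => ?_⟩
  obtain ⟨h3, h5, -, h7⟩ := H hx
  refine ⟨h3, fun s => ?_⟩
  have hx' : ‖dil x s‖ ≤ ‖x‖ := by
    refine (pi_norm_le_iff_of_nonneg (norm_nonneg _)).2 fun j => ?_
    refine le_trans ?_ (norm_le_pi_norm x j)
    rw [dil, norm_mul]
    refine mul_le_of_le_one_right (norm_nonneg _) ?_
    rw [Real.norm_eq_abs, abs_of_nonneg (s j).2.1]; exact (s j).2.2
  -- Rescaling does not increase norms, so the rescaled pair stays in the ball where the equation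
  -- has a unique solution.
  have hv' : ‖precomp s (ψ x)‖ ≤ ‖ψ x‖ := by
    refine (pi_norm_le_iff_of_nonneg (norm_nonneg _)).2 fun a => ?_
    refine le_trans ?_ (norm_le_pi_norm (ψ x) a)
    refine (ContinuousMap.norm_le _ (norm_nonneg _)).2 fun t => ?_
    exact (ψ x a).norm_coe_le_norm _
  have hd : dist (dil x s, precomp s (ψ x)) (0 : (Fin m → ℝ) × (ι → C(Cube m, ℝ))) < ε := by
    rw [dist_zero_right, Prod.norm_def]
    exact max_lt (hx'.trans_lt h7) (hv'.trans_lt h5)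
  refine (e1 hd).1 ?_
  rw [goursatMap_precomp, h3]
  rfl

/-! ### Solving the differential system -/

/-- Local solvability of `∂_{c a} u_a = Q_a(x, u)` with `u_a = 0` on `{x | x_{c a} = 0}`. -/
lemma goursat {m : ℕ} {ι : Type*} [Fintype ι] (c : ι → Fin m)
    (Q : ι → MvPolynomial (Fin m ⊕ ι) ℝ) :
    ∃ δ > 0, ∃ u : (Fin m → ℝ) → ι → ℝ,
      (∀ a, ContDiffOn ℝ ω (fun x => u x a) (Metric.ball 0 δ)) ∧
      (∀ x ∈ Metric.ball 0 δ, ∀ a, x (c a) = 0 → u x a = 0) ∧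
      ∀ x ∈ Metric.ball 0 δ, ∀ a, fderiv ℝ (fun y => u y a) x (Pi.single (c a) 1)
        = eval (Sum.elim x (u x)) (Q a) := by
  obtain ⟨δ, hδ, ψ, hψ, H⟩ := exists_scaling_family c Q
  set u : (Fin m → ℝ) → ι → ℝ := fun x a => ψ x a 1 with hu
  have hsm : ∀ a, ContDiffOn ℝ ω (fun x => u x a) (Metric.ball 0 δ) := fun a =>
    ((ContinuousMap.evalCLM ℝ (1 : Cube m)).comp
      (ContinuousLinearMap.proj (R := ℝ) (φ := fun _ : ι => C(Cube m, ℝ)) a)).contDiff.comp_contDiffOn hψ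
  have hint : ∀ x ∈ Metric.ball (0 : Fin m → ℝ) δ, ∀ a, u x a = ∫ r in (0 : ℝ)..x (c a),
      eval (Sum.elim (Function.update x (c a) r) (u (Function.update x (c a) r))) (Q a) := by
    intro x hx a
    obtain ⟨h1, h2⟩ := H x hx
    have h3 := congrArg (fun f => f a 1) h1
    simp only [goursatMap_apply, Pi.zero_apply, ContinuousMap.zero_apply, sub_eq_zero] at h3
    have h4 : ∀ s : Cube m, (fun b => ψ x b s) = u (dil x s) := by
      intro s; funext b; simp [hu, h2, precomp]
    simp only [h4] at h3
    have h5 := intervalIntegral.smul_integral_comp_mul_left (a := 0) (b := 1)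
      (fun r => eval (Sum.elim (Function.update x (c a) r)
        (u (Function.update x (c a) r))) (Q a)) (x (c a))
    rw [mul_zero, mul_one] at h5
    rw [← h5]
    refine h3.trans ?_
    simp only [Pi.one_apply, Set.Icc.coe_one, one_mul, smul_eq_mul]
    congr 1
    refine intervalIntegral.integral_congr fun τ hτ => ?_
    rw [Set.uIcc_of_le zero_le_one] at hτ
    have h6 : dil x (ray (c a) τ 1) = Function.update x (c a) (x (c a) * τ) := by
      funext j
      by_cases h : j = c a
      · subst h; simp [dil, ray, Set.projIcc_of_mem _ hτ]
      · simp [dil, ray, h]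
    simp only [h6]
  refine ⟨δ, hδ, u, hsm, fun x hx a h0 => by rw [hint x hx a, h0]; simp, fun x hx a => ?_⟩
  have hupd : ∀ r ∈ Metric.ball (0 : ℝ) δ, Function.update x (c a) r ∈ Metric.ball 0 δ := by
    intro r hr
    rw [mem_ball_zero_iff, pi_norm_lt_iff hδ] at *
    intro j
    by_cases h : j = c a
    · subst h; simpa using hr
    · simpa [h] using hx j
  have hxc : x (c a) ∈ Metric.ball (0 : ℝ) δ := by
    rw [mem_ball_zero_iff] at *
    exact (norm_le_pi_norm x (c a)).trans_lt hx
  set g : ℝ → ℝ := fun r =>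
    eval (Sum.elim (Function.update x (c a) r) (u (Function.update x (c a) r))) (Q a) with hg
  have hgc : ContinuousOn g (Metric.ball 0 δ) := by
    have h1 : ContinuousOn (fun y : Fin m → ℝ => eval (Sum.elim y (u y)) (Q a))
        (Metric.ball 0 δ) := by
      refine (contDiffOn_eval (n := ω) ?_ (Q a)).continuousOn
      rintro (j | b)
      · simp only [Sum.elim_inl]; fun_prop
      · exact hsm b
    exact h1.comp (by fun_prop) hupd
  have hd1 : HasDerivAt (fun t => ∫ r in (0 : ℝ)..t, g r) (g (x (c a))) (x (c a)) := by
    refine intervalIntegral.integral_hasDerivAt_right ?_ ?_ ?_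
    · refine (hgc.mono ?_).intervalIntegrable
      exact (convex_ball (0 : ℝ) δ).ordConnected.uIcc_subset (Metric.mem_ball_self hδ) hxc
    · exact hgc.stronglyMeasurableAtFilter Metric.isOpen_ball _ hxc
    · exact hgc.continuousAt (Metric.isOpen_ball.mem_nhds hxc)
  have hd2 : HasDerivAt (fun t => u (Function.update x (c a) t) a)
      (fderiv ℝ (fun y => u y a) x (Pi.single (c a) 1)) (x (c a)) := by
    have h1 : DifferentiableAt ℝ (fun y => u y a) (Function.update x (c a) (x (c a))) := by
      rw [Function.update_eq_self]
      exact ((hsm a).contDiffAt (Metric.isOpen_ball.mem_nhds hx)).differentiableAt (by simp)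
    have := h1.hasFDerivAt.comp_hasDerivAt (x (c a)) (hasDerivAt_update x (c a) (x (c a)))
    rwa [Function.update_eq_self] at this
  have heq : (fun t => u (Function.update x (c a) t) a) =ᶠ[𝓝 (x (c a))]
      fun t => ∫ r in (0 : ℝ)..t, g r := by
    filter_upwards [Metric.isOpen_ball.mem_nhds hxc] with t ht
    rw [hint _ (hupd t ht) a]
    simp [hg]
  have := (hd1.congr_of_eventuallyEq heq).unique hd2
  rw [← this]
  simp [hg]


/-! ### The Christoffel symbols -/

lemma exists_third_index {m : ℕ} (hm : 3 ≤ m) :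
    ∃ c : Fin m → Fin m → Fin m, (∀ j k, c j k = c k j) ∧ ∀ j k, c j k ≠ j := by
  have h : ∀ j k : Fin m, ∃ i, i ≠ j ∧ i ≠ k := by
    intro j k
    obtain ⟨i, hi⟩ := Finset.exists_mem_notMem_of_card_lt_card
      (s := ({j, k} : Finset (Fin m))) (t := Finset.univ)
      (by rw [Finset.card_univ, Fintype.card_fin]; exact Finset.card_le_two.trans_lt hm)
    exact ⟨i, by simpa using hi⟩
  choose c h1 h2 using h
  refine ⟨fun j k => c (min j k) (max j k), fun j k => by simp only [min_comm, max_comm],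
    fun j k => ?_⟩
  rcases le_total j k with h | h
  · simpa [h] using h1 j k
  · simpa [h] using h2 k j

/-- The Christoffel symbols of `chr` as polynomials in the coordinates (`Sum.inl`) and in the unknowns
`u_{jk}` (`Sum.inr`). -/
def chrPoly {m : ℕ} (A : Fin m → Fin m → Fin m → Fin m → ℝ) (c : Fin m → Fin m → Fin m)
    (j k l : Fin m) : MvPolynomial (Fin m ⊕ Fin m × Fin m) ℝ :=
  ∑ i, C ((A i j k l + A i k j l) / 3) * X (Sum.inl i)
    + if l = c j k then C (1 / 2) * (X (Sum.inr (j, k)) + X (Sum.inr (k, j))) else 0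

/-- The Christoffel symbols `L_{jk}^l + δ_{l, c j k} (u_{jk} + u_{kj}) / 2`, where
`L_{jk}^l(x) = (1/3) ∑ i, (A_{ijk}^l + A_{ikj}^l) x_i`. -/
def chr {m : ℕ} (A : Fin m → Fin m → Fin m → Fin m → ℝ) (c : Fin m → Fin m → Fin m)
    (u : (Fin m → ℝ) → Fin m × Fin m → ℝ) (x : Fin m → ℝ) (j k l : Fin m) : ℝ :=
  ∑ i, (A i j k l + A i k j l) / 3 * x i
    + if l = c j k then 1 / 2 * (u x (j, k) + u x (k, j)) else 0

lemma eval_chrPoly {m : ℕ} (A : Fin m → Fin m → Fin m → Fin m → ℝ) (c : Fin m → Fin m → Fin m)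
    (u : (Fin m → ℝ) → Fin m × Fin m → ℝ) (x : Fin m → ℝ) (j k l : Fin m) :
    eval (Sum.elim x (u x)) (chrPoly A c j k l) = chr A c u x j k l := by
  unfold chrPoly chr
  split_ifs <;> simp

lemma fderiv_chr {m : ℕ} (A : Fin m → Fin m → Fin m → Fin m → ℝ) (c : Fin m → Fin m → Fin m)
    (u : (Fin m → ℝ) → Fin m × Fin m → ℝ) (x : Fin m → ℝ)
    (hu : ∀ a, DifferentiableAt ℝ (fun y => u y a) x) (i j k l : Fin m) :
    fderiv ℝ (fun y => chr A c u y j k l) x (Pi.single i 1) =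
      (A i j k l + A i k j l) / 3 + if l = c j k then
        1 / 2 * (fderiv ℝ (fun y => u y (j, k)) x (Pi.single i 1)
          + fderiv ℝ (fun y => u y (k, j)) x (Pi.single i 1)) else 0 := by
  have h1 : HasFDerivAt (fun y : Fin m → ℝ => ∑ i, (A i j k l + A i k j l) / 3 * y i)
      (∑ i, ((A i j k l + A i k j l) / 3) • ContinuousLinearMap.proj (R := ℝ) (φ := fun _ => ℝ) i)
      x :=
    HasFDerivAt.fun_sum fun i _ => (hasFDerivAt_apply i x).const_mul _
  have h2 : HasFDerivAt (fun y => if l = c j k then 1 / 2 * (u y (j, k) + u y (k, j)) else 0)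
      (if l = c j k then (1 / 2 : ℝ) • (fderiv ℝ (fun y => u y (j, k)) x
        + fderiv ℝ (fun y => u y (k, j)) x) else 0) x := by
    split_ifs
    · exact ((hu (j, k)).hasFDerivAt.add (hu (k, j)).hasFDerivAt).const_mul _
    · exact hasFDerivAt_const _ _
  have h3 := (h1.add h2).fderiv
  have h4 : (fun y => chr A c u y j k l) = (fun y : Fin m → ℝ =>
      ∑ i, (A i j k l + A i k j l) / 3 * y i) +
      fun y => if l = c j k then 1 / 2 * (u y (j, k) + u y (k, j)) else 0 := rfl
  rw [h4, h3, _root_.add_apply]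
  congr 1
  · simp [Pi.single_apply]
  · split_ifs <;> simp [mul_add]

end RicciRealization

open RicciRealization MvPolynomial in
/-- **Theorem 1.4 (2).** A Ricci antisymmetric generalized algebraic curvature operator on
ℝ^m (m ≥ 3) is geometrically realizable by a torsion-free connection, defined on a
neighborhood of the origin, whose Ricci tensor is antisymmetric at every point of that
neighborhood, and whose curvature at the origin equals A. -/
theorem ricci_antisymmetric_realization
    (m : ℕ) (hm : 3 ≤ m) (A : Fin m → Fin m → Fin m → Fin m → ℝ)
    (hanti : ∀ i j k l, A i j k l = - A j i k l)
    (hbianchi : ∀ i j k l, A i j k l + A j k i l + A k i j l = 0)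
    (hricci : ∀ i j, ricC A i j = - ricC A j i) :
    ∃ U : Set (Fin m → ℝ), IsOpen U ∧ (0 : Fin m → ℝ) ∈ U ∧
      ∃ Γ : (Fin m → ℝ) → Fin m → Fin m → Fin m → ℝ,
        (∀ i j k, ContDiffOn ℝ (⊤ : ℕ∞) (fun x => Γ x i j k) U) ∧
        (∀ x ∈ U, ∀ i j k, Γ x i j k = Γ x j i k) ∧
        (∀ i j k l, curv Γ 0 i j k l = A i j k l) ∧
        (∀ P ∈ U, ∀ j k, ricC (curv Γ P) j k = - ricC (curv Γ P) k j) := by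
  obtain ⟨c, hsymm, hne⟩ := exists_third_index hm
  obtain ⟨δ, hδ, u, hu, hu0, hdu⟩ := goursat (fun a : Fin m × Fin m => c a.1 a.2)
    (fun a => -∑ i, ∑ n, (chrPoly A c i n i * chrPoly A c a.1 a.2 n
      - chrPoly A c a.1 n i * chrPoly A c i a.2 n))
  simp only [map_neg, map_sum, map_sub, map_mul, eval_chrPoly] at hdu
  have hud : ∀ x ∈ Metric.ball (0 : Fin m → ℝ) δ, ∀ a, DifferentiableAt ℝ (fun y => u y a) x :=
    fun x hx a => ((hu a).contDiffAt (Metric.isOpen_ball.mem_nhds hx)).differentiableAt (by simp)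
  have hmem : (0 : Fin m → ℝ) ∈ Metric.ball (0 : Fin m → ℝ) δ := Metric.mem_ball_self hδ
  have hchr0 : ∀ j k l, chr A c u 0 j k l = 0 := by
    intro j k l
    simp [chr, hu0 0 hmem]
  -- The first-order part of the curvature of the linear symbols `L` is `A`.
  have hlin : ∀ i j k l, (A i j k l + A i k j l) / 3 - (A j i k l + A j k i l) / 3 = A i j k l := by
    intro i j k l
    linarith [hanti i j k l, hanti i k j l, hbianchi i j k l]
  have hdu0 : ∀ a i, fderiv ℝ (fun y => u y a) 0 (Pi.single i 1) = 0 := by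
    intro a i
    by_cases h : i = c a.1 a.2
    · rw [h, hdu 0 hmem]
      simp [hchr0]
    -- In the other directions `u_a` vanishes identically along the coordinate axis.
    · have h1 := (hud 0 hmem a).hasFDerivAt.hasLineDerivAt (Pi.single i 1)
      refine HasLineDerivAt.unique h1 ?_
      have h2 : HasDerivAt (fun _ : ℝ => (0 : ℝ)) 0 0 := hasDerivAt_const _ _
      refine h2.congr_of_eventuallyEq ?_
      have h3 : ContinuousAt (fun t : ℝ => (0 : Fin m → ℝ) + t • Pi.single i (1 : ℝ)) 0 := by
        fun_prop
      filter_upwards [h3.preimage_mem_nhds (by simpa using Metric.ball_mem_nhds _ hδ)] with t ht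
      refine hu0 _ ht a ?_
      simp [Ne.symm h]
  -- The quadratic terms of the Ricci tensor are replaced by a derivative of `u`, using its equation.
  have hric : ∀ P ∈ Metric.ball (0 : Fin m → ℝ) δ, ∀ j k, ricC (curv (chr A c u) P) j k =
      ricC A j k + 1 / 2 * (fderiv ℝ (fun y => u y (j, k)) P (Pi.single (c j k) 1)
        + fderiv ℝ (fun y => u y (k, j)) P (Pi.single (c j k) 1))
      - fderiv ℝ (fun y => u y (j, k)) P (Pi.single (c j k) 1) := by
    intro P hP j k
    have h1 : ∀ i, curv (chr A c u) P i j k i = A i j k i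
        + (if i = c j k then 1 / 2 * (fderiv ℝ (fun y => u y (j, k)) P (Pi.single i 1)
          + fderiv ℝ (fun y => u y (k, j)) P (Pi.single i 1)) else 0)
        + ∑ n, (chr A c u P i n i * chr A c u P j k n - chr A c u P j n i * chr A c u P i k n) := by
      intro i
      rw [curv, fderiv_chr A c u P (hud P hP), fderiv_chr A c u P (hud P hP),
        if_neg (hne i k).symm]
      linarith [hlin i j k i]
    simp only [ricC, h1, Finset.sum_add_distrib, Finset.sum_ite_eq', Finset.mem_univ, if_true]
    linarith [hdu P hP (j, k)]
  refine ⟨Metric.ball 0 δ, Metric.isOpen_ball, hmem, chr A c u, ?_, ?_, ?_, ?_⟩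
  · intro j k l
    have h : ContDiffOn ℝ (⊤ : ℕ∞) (fun x => eval (Sum.elim x (u x)) (chrPoly A c j k l))
        (Metric.ball 0 δ) := by
      refine contDiffOn_eval ?_ _
      rintro (i | a)
      · simp only [Sum.elim_inl]; fun_prop
      · exact (hu a).of_le le_top
    simpa only [eval_chrPoly] using h
  · intro x _ j k l
    simp only [chr, hsymm k j, add_comm (u x (k, j)), add_comm (A _ k j l)]
  · intro i j k l
    rw [curv, fderiv_chr A c u 0 (hud 0 hmem), fderiv_chr A c u 0 (hud 0 hmem)]
    simp only [hdu0, hchr0]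
    simpa using hlin i j k l
  · intro P hP j k
    rw [hric P hP j k, hric P hP k j, hsymm k j, hricci j k]
    ring
end
end

section
/- Let V = ℝ^m with m ≥ 3 and let A ∈ 𝔄(V) be Ricci flat, i.e. ρ(A) = 0. Then there exists a smooth torsion-free connection ∇ defined on a neighborhood of 0 in ℝ^m whose curvature at 0 equals A and whose Ricci tensor vanishes identically on that neighborhood. -/
/-!
The Christoffel symbols are sought as `Γ = Γ_lin + Y`. The linear part `Γ_lin` has curvature `A` at
the origin and, as `A` is Ricci flat, is trace free and divergence free (`linCoeff`). Since
`m ≥ 3`, each unordered pair `{j, k}` has an index `e j k` outside it, and `Y_{jk}^l` is taken to be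
zero unless `l = e j k`. Then `Γ` is trace free, because `e i k ≠ i`, so its Ricci tensor reduces to
`∑ i, ∂_i Γ_{jk}^i - ∑ n p, Γ_{jn}^p Γ_{pk}^n`, which vanishes as soon as
`Y_{jk}^l` with `l = e j k` is the integral of the quadratic term along the `l`-th coordinate,
starting from the hyperplane `x_l = 0`.

To solve this integral equation with a smooth solution, the point `x` is made a parameter: the
rescaled symbols `ξ ↦ Γ (ξ x)` on the unit cube `[0, 1]^m` solve an equation in the Banach space of
continuous functions on the cube which is polynomial in `x` and in the unknown (`Psi`). The inverse
function theorem (`exists_solution`) gives, for small `x`, a unique small solution `Y x`, smooth in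
`x` and with vanishing derivative at `0`. Uniqueness shows that `Y x` restricted to the smaller box
of corner `ξ` is `Y (ξ x)` (`Y_mul`), so that the values of `Y x` at the corner `1` solve the
original integral equation; it also gives the symmetry of `Γ` in its lower indices (`Y_symm`).
-/

noncomputable section

namespace RicciFlat

open Set Filter Topology unitInterval

/-! ### Continuous functions on the unit cube -/

/-- The unit cube `[0, 1]^m`. -/
abbrev Cube (m : ℕ) := Fin m → I

/-- The Banach algebra of continuous real functions on the unit cube. -/
abbrev Fn (m : ℕ) := C(Cube m, ℝ)

/-- Christoffel symbols `z j k l = z_{jk}^l` on the unit cube, as an element of a Banach space. -/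
abbrev Sys (m : ℕ) := Fin m → Fin m → Fin m → Fn m

variable {m : ℕ}

/-- The coordinate function `ξ ↦ ξ_a` on the cube. -/
def coord (a : Fin m) : Fn m := ⟨fun ξ => (ξ a : ℝ), by fun_prop⟩

/-- The point `ξ` with its `l`-th coordinate multiplied by `s`; the factor `s` is clamped to
`[0, 1]`, so that the map is defined and continuous for all real `s`. -/
def shrink (l : Fin m) (ξ : Cube m) (s : ℝ) : Cube m :=
  Function.update ξ l (projIcc 0 1 zero_le_one s * ξ l)

lemma continuous_shrink (l : Fin m) : Continuous fun p : Cube m × ℝ => shrink l p.1 p.2 := by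
  unfold shrink
  refine Continuous.update continuous_fst l ?_
  exact (continuous_projIcc.comp continuous_snd).mul ((continuous_apply l).comp continuous_fst)

/-- The antiderivative of `f` in the `l`-th coordinate vanishing on the face `ξ_l = 0`, written as
an integral over `[0, 1]`. -/
def primFun (l : Fin m) (f : Fn m) : Fn m where
  toFun ξ := (ξ l : ℝ) * ∫ s in (0 : ℝ)..1, f (shrink l ξ s)
  continuous_toFun := by
    refine Continuous.mul (by fun_prop) ?_
    refine intervalIntegral.continuous_parametric_intervalIntegral_of_continuous' ?_ 0 1
    exact f.continuous.comp (continuous_shrink l)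

lemma intervalIntegrable_shrink (l : Fin m) (f : Fn m) (ξ : Cube m) :
    IntervalIntegrable (fun s => f (shrink l ξ s)) MeasureTheory.volume 0 1 := by
  apply Continuous.intervalIntegrable
  exact f.continuous.comp ((continuous_shrink l).comp (by fun_prop : Continuous fun s => (ξ, s)))

/-- `primFun` as a bounded operator. -/
def prim (l : Fin m) : Fn m →L[ℝ] Fn m :=
  LinearMap.mkContinuous
    { toFun := primFun l
      map_add' := fun f g => by
        ext ξ
        simp only [primFun, ContinuousMap.coe_mk, ContinuousMap.add_apply]
        rw [intervalIntegral.integral_add (intervalIntegrable_shrink l f ξ)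
          (intervalIntegrable_shrink l g ξ), mul_add]
      map_smul' := fun c f => by
        ext ξ
        simp only [primFun, ContinuousMap.coe_mk, ContinuousMap.smul_apply, smul_eq_mul,
          intervalIntegral.integral_const_mul, RingHom.id_apply]
        ring }
    1 (fun f => by
      rw [one_mul, ContinuousMap.norm_le _ (norm_nonneg _)]
      intro ξ
      simp only [LinearMap.coe_mk, AddHom.coe_mk, primFun, ContinuousMap.coe_mk, norm_mul]
      have h1 : ‖(ξ l : ℝ)‖ ≤ 1 := by
        rw [Real.norm_eq_abs, abs_of_nonneg (ξ l).2.1]; exact (ξ l).2.2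
      have h2 : ‖∫ s in (0 : ℝ)..1, f (shrink l ξ s)‖ ≤ ‖f‖ := by
        simpa using intervalIntegral.norm_integral_le_of_norm_le_const (a := 0) (b := 1)
          (fun s _ => f.norm_coe_le_norm (shrink l ξ s))
      calc _ ≤ 1 * ‖f‖ := mul_le_mul h1 h2 (norm_nonneg _) zero_le_one
        _ = _ := one_mul _)

lemma prim_apply (l : Fin m) (f : Fn m) (ξ : Cube m) :
    prim l f ξ = (ξ l : ℝ) * ∫ s in (0 : ℝ)..1, f (shrink l ξ s) := rfl

/-! ### The integral equation -/

/-- The linear Christoffel symbols `∑ a, x_a G_{ajk}^l`, rescaled to the cube of corner `x`. -/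
def lin (G : Fin m → Fin m → Fin m → Fin m → ℝ) (x : Fin m → ℝ) : Sys m :=
  fun j k l => ∑ a, (x a * G a j k l) • coord a

/-- The quadratic term `∑ n p, z_{jn}^p z_{pk}^n` of the Ricci tensor of trace-free symbols. -/
def quad (z : Sys m) (j k : Fin m) : Fn m := ∑ n, ∑ p, z j n p * z p k n

/-- The integral equation for the nonlinear part `y` of the symbols, rescaled to the cube of corner
`x`, is `y = Psi e G (x, y)`. -/
def Psi (e : Fin m → Fin m → Fin m) (G : Fin m → Fin m → Fin m → Fin m → ℝ)
    (q : (Fin m → ℝ) × Sys m) : Sys m :=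
  fun j k l => if l = e j k then q.1 l • prim l (quad (lin G q.1 + q.2) j k) else 0

/-- The function `η ↦ f (ξ η)`: the restriction of `f` to the box of corner `ξ`, rescaled to the
cube. -/
def pull (ξ : Cube m) (f : Fn m) : Fn m := f.comp ⟨fun η => ξ * η, by fun_prop⟩

lemma shrink_mul (l : Fin m) (ξ η : Cube m) (s : ℝ) :
    ξ * shrink l η s = shrink l (ξ * η) s := by
  ext i
  by_cases h : i = l
  · subst h; simp [shrink, mul_left_comm]
  · simp [shrink, h]

/-- Restricting to a box multiplies the antiderivative by the side `ξ l`; in the equation this is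
absorbed by the factor `c = x_l`. -/
lemma smul_pull_prim (ξ : Cube m) (l : Fin m) (c : ℝ) (f : Fn m) :
    c • pull ξ (prim l f) = (ξ l * c) • prim l (pull ξ f) := by
  ext η
  simp only [pull, ContinuousMap.smul_apply, ContinuousMap.comp_apply, ContinuousMap.coe_mk,
    prim_apply, smul_eq_mul, shrink_mul]
  simp; ring

lemma lin_pull (G : Fin m → Fin m → Fin m → Fin m → ℝ) (x : Fin m → ℝ) (ξ : Cube m)
    (j k l : Fin m) : pull ξ (lin G x j k l) = lin G (fun a => ξ a * x a) j k l := by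
  ext η
  simp only [pull, lin, ContinuousMap.comp_apply, ContinuousMap.sum_apply,
    ContinuousMap.smul_apply, ContinuousMap.coe_mk, coord, smul_eq_mul]
  refine Finset.sum_congr rfl fun a _ => ?_
  simp; ring

lemma quad_pull (z : Sys m) (ξ : Cube m) (j k : Fin m) :
    pull ξ (quad z j k) = quad (fun j k l => pull ξ (z j k l)) j k := by
  ext η
  simp [pull, quad, ContinuousMap.sum_apply]

lemma norm_pull_le (ξ : Cube m) (f : Fn m) : ‖pull ξ f‖ ≤ ‖f‖ := by
  rw [ContinuousMap.norm_le _ (norm_nonneg _)]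
  intro η
  exact f.norm_coe_le_norm _

/-- The equations for different parameters are compatible with restriction to smaller boxes. -/
lemma Psi_pull (e : Fin m → Fin m → Fin m) (G : Fin m → Fin m → Fin m → Fin m → ℝ)
    (x : Fin m → ℝ) (y : Sys m) (ξ : Cube m) (j k l : Fin m) :
    pull ξ (Psi e G (x, y) j k l)
      = Psi e G (fun a => ξ a * x a, fun j k l => pull ξ (y j k l)) j k l := by
  have h : (fun j k l => pull ξ ((lin G x + y) j k l))
      = lin G (fun a => ξ a * x a) + fun j k l => pull ξ (y j k l) := by
    funext j k l
    change pull ξ (lin G x j k l) + pull ξ (y j k l) = lin G _ j k l + pull ξ (y j k l)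
    rw [lin_pull]
  unfold Psi
  dsimp only
  split_ifs with hl
  · rw [← h, ← quad_pull, ← smul_pull_prim]; rfl
  · rfl

/-- The equation is invariant under exchanging the two lower indices. -/
lemma Psi_swap (e : Fin m → Fin m → Fin m) (he : ∀ j k, e j k = e k j)
    (G : Fin m → Fin m → Fin m → Fin m → ℝ) (hG : ∀ a j k l, G a j k l = G a k j l)
    (x : Fin m → ℝ) (y : Sys m) (j k l : Fin m) :
    Psi e G (x, y) k j l = Psi e G (x, fun j k l => y k j l) j k l := by
  have h : ∀ j k l, (lin G x + y) j k l = (lin G x + fun j k l => y k j l) k j l := by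
    intro j k l
    simp only [Pi.add_apply, lin, hG _ j k l]
  unfold Psi
  dsimp only
  rw [he k j]
  congr 3
  unfold quad
  rw [Finset.sum_comm]
  refine Finset.sum_congr rfl fun n _ => Finset.sum_congr rfl fun p _ => ?_
  rw [h, h, mul_comm]

lemma contDiff_Psi (e : Fin m → Fin m → Fin m) (G : Fin m → Fin m → Fin m → Fin m → ℝ)
    {n : WithTop ℕ∞} : ContDiff ℝ n (Psi e G) := by
  refine contDiff_pi.2 fun j => contDiff_pi.2 fun k => contDiff_pi.2 fun l => ?_
  unfold Psi
  by_cases h : l = e j k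
  · simp only [h, if_true]
    unfold quad lin
    simp only [Pi.add_apply]
    fun_prop
  · simp only [h, if_false]
    exact contDiff_const

/-- At the origin both factors `x_l` and the integral of the quadratic term vanish, so the
derivative of `Psi` is zero there. -/
lemma hasFDerivAt_Psi (e : Fin m → Fin m → Fin m) (G : Fin m → Fin m → Fin m → Fin m → ℝ) :
    HasFDerivAt (Psi e G) (0 : (Fin m → ℝ) × Sys m →L[ℝ] Sys m) 0 := by
  refine hasFDerivAt_pi'.2 fun j => hasFDerivAt_pi'.2 fun k => hasFDerivAt_pi'.2 fun l => ?_
  unfold Psi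
  by_cases h : l = e j k
  · simp only [h, if_true]
    have h1 : DifferentiableAt ℝ (fun q : (Fin m → ℝ) × Sys m => q.1 (e j k)) 0 := by fun_prop
    have h2 : DifferentiableAt ℝ (fun q : (Fin m → ℝ) × Sys m =>
        prim (e j k) (quad (lin G q.1 + q.2) j k)) 0 := by
      unfold quad lin
      simp only [Pi.add_apply]
      fun_prop
    refine (h1.hasFDerivAt.smul h2.hasFDerivAt).congr_fderiv ?_
    refine ContinuousLinearMap.ext fun v => ?_
    simp [quad, lin]
  · simp only [h, if_false]
    exact (hasFDerivAt_const _ _).congr_fderiv (ContinuousLinearMap.ext fun v => by simp)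

/-! ### Smooth solution by the inverse function theorem -/

/-- The integral equation has, for small `x`, exactly one small solution `Y x`; it depends smoothly
on `x` and its derivative at the origin vanishes. -/
lemma exists_solution (e : Fin m → Fin m → Fin m)
    (G : Fin m → Fin m → Fin m → Fin m → ℝ) :
    ∃ r > 0, ∃ R > 0, ∃ Y : (Fin m → ℝ) → Sys m,
      ContDiffOn ℝ (⊤ : ℕ∞) Y (Metric.ball 0 r) ∧ Y 0 = 0 ∧
      HasFDerivAt Y (0 : (Fin m → ℝ) →L[ℝ] Sys m) 0 ∧
      (∀ x ∈ Metric.ball 0 r, ‖Y x‖ < R ∧ Y x = Psi e G (x, Y x)) ∧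
      ∀ x ∈ Metric.ball 0 r, ∀ y, ‖y‖ < R → y = Psi e G (x, y) → y = Y x := by
  -- The equation reads `F (x, y) = (x, 0)`, and the derivative of `F` at `0` is the identity.
  set F : (Fin m → ℝ) × Sys m → (Fin m → ℝ) × Sys m := fun q => (q.1, q.2 - Psi e G q) with hF
  -- Here `⊤` is analyticity: unlike `C^∞` at a point, it propagates to a neighborhood.
  have hFs : ContDiff ℝ ⊤ F :=
    contDiff_fst.prodMk (contDiff_snd.sub (contDiff_Psi e G))
  have hFd : HasFDerivAt F ((ContinuousLinearEquiv.refl ℝ ((Fin m → ℝ) × Sys m) :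
      ((Fin m → ℝ) × Sys m) ≃L[ℝ] ((Fin m → ℝ) × Sys m)) :
      ((Fin m → ℝ) × Sys m) →L[ℝ] ((Fin m → ℝ) × Sys m)) 0 := by
    refine (hasFDerivAt_fst.prodMk (hasFDerivAt_snd.sub (hasFDerivAt_Psi e G))).congr_fderiv ?_
    refine ContinuousLinearMap.ext fun v => ?_
    simp
  have hF0 : F 0 = 0 := by
    simp only [hF, Prod.fst_zero, Prod.snd_zero]
    refine Prod.ext rfl ?_
    funext j k l
    simp [Psi]
  have hst : HasStrictFDerivAt F _ 0 := hFs.contDiffAt.hasStrictFDerivAt' hFd (by simp)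
  set H := hst.toOpenPartialHomeomorph F with hH
  have hHF : ∀ q, H q = F q := fun q => rfl
  have hsrc : (0 : (Fin m → ℝ) × Sys m) ∈ H.source :=
    hst.mem_toOpenPartialHomeomorph_source
  have htgt : (0 : (Fin m → ℝ) × Sys m) ∈ H.target := by
    have := hst.image_mem_toOpenPartialHomeomorph_target
    rwa [hF0] at this
  have hsymm0 : H.symm 0 = 0 := by
    have := H.left_inv hsrc
    rwa [hHF, hF0] at this
  have hsm : ContDiffAt ℝ ⊤ H.symm 0 := by
    refine H.contDiffAt_symm htgt (f₀' := ContinuousLinearEquiv.refl ℝ _) ?_ ?_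
    · rw [hsymm0]; exact hFd
    · exact hFs.contDiffAt
  have hsd : HasFDerivAt H.symm
      (ContinuousLinearMap.id ℝ ((Fin m → ℝ) × Sys m)) 0 := by
    have := hst.to_localInverse
    rw [hF0] at this
    exact this.hasFDerivAt
  have hι : ContDiff ℝ ⊤ (fun x : Fin m → ℝ => (x, (0 : Sys m))) := by fun_prop
  set Y : (Fin m → ℝ) → Sys m := fun x => (H.symm (x, 0)).2 with hY
  have hYs : ContDiffAt ℝ ⊤ Y 0 := by
    have : ContDiffAt ℝ ⊤ (fun x : Fin m → ℝ => H.symm (x, (0 : Sys m))) 0 :=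
      ContDiffAt.comp (0 : Fin m → ℝ) (g := H.symm) hsm hι.contDiffAt
    exact this.snd
  have hY0 : Y 0 = 0 := by
    change (H.symm 0).2 = 0
    rw [hsymm0]; rfl
  have hYd : HasFDerivAt Y (0 : (Fin m → ℝ) →L[ℝ] Sys m) 0 := by
    have h1 : HasFDerivAt (fun x : Fin m → ℝ => (x, (0 : Sys m)))
        ((ContinuousLinearMap.id ℝ (Fin m → ℝ)).prod 0) 0 :=
      (hasFDerivAt_id _).prodMk (hasFDerivAt_const _ _)
    have h2 := HasFDerivAt.comp (0 : Fin m → ℝ) (g := H.symm) hsd h1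
    exact h2.snd.congr_fderiv (ContinuousLinearMap.ext fun v => by simp)
  obtain ⟨R, hR, hRs⟩ := Metric.isOpen_iff.1 H.open_source 0 hsrc
  have hev : ∀ᶠ x in 𝓝 (0 : Fin m → ℝ), ContDiffAt ℝ ⊤ Y x ∧ Y x ∈ Metric.ball 0 R ∧
      (x, (0 : Sys m)) ∈ H.target ∧ x ∈ Metric.ball 0 R := by
    refine (hYs.eventually (by simp)).and (((hYs.continuousAt.eventually_mem ?_)).and
      ((hι.continuous.continuousAt.eventually_mem ?_).and (Metric.ball_mem_nhds _ hR)))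
    · rw [hY0]; exact Metric.ball_mem_nhds _ hR
    · exact H.open_target.mem_nhds htgt
  obtain ⟨r, hr, hb⟩ := Metric.eventually_nhds_iff_ball.1 hev
  have hsol : ∀ x ∈ Metric.ball (0 : Fin m → ℝ) r, H.symm (x, 0) = (x, Y x) ∧
      Y x = Psi e G (x, Y x) := by
    intro x hx
    have h := H.right_inv (hb x hx).2.2.1
    rw [hHF] at h
    have h1 : (H.symm (x, 0)).1 = x := congrArg Prod.fst h
    have h2 : H.symm (x, 0) = (x, Y x) := Prod.ext h1 rfl
    rw [h2] at h
    exact ⟨h2, sub_eq_zero.1 (congrArg Prod.snd h)⟩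
  refine ⟨r, hr, R, hR, Y, fun x hx => ((hb x hx).1.of_le le_top).contDiffWithinAt, hY0, hYd,
    fun x hx => ⟨by simpa using (hb x hx).2.1, (hsol x hx).2⟩, fun x hx y hy hyP => ?_⟩
  have hmem : (x, y) ∈ H.source := by
    apply hRs
    rw [mem_ball_zero_iff, Prod.norm_def, max_lt_iff]
    exact ⟨by simpa using (hb x hx).2.2.2, hy⟩
  have hFx : H (x, y) = (x, 0) := Prod.ext rfl (sub_eq_zero.2 hyP)
  have := H.left_inv hmem
  rw [hFx, (hsol x hx).1] at this
  exact (congrArg Prod.snd this).symm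

/-! ### From the cube back to a neighborhood of the origin -/

/-- The Christoffel symbols at `x`: the value at the corner `1` of the rescaled symbols with
parameter `x`. -/
def conn (G : Fin m → Fin m → Fin m → Fin m → ℝ) (Y : (Fin m → ℝ) → Sys m)
    (x : Fin m → ℝ) (j k l : Fin m) : ℝ := (∑ a, x a * G a j k l) + Y x j k l 1

/-- The quadratic term `∑ n p, Γ_{jn}^p Γ_{pk}^n` at the point `x`. -/
def Q (Γ : (Fin m → ℝ) → Fin m → Fin m → Fin m → ℝ) (x : Fin m → ℝ) (j k : Fin m) : ℝ :=
  ∑ n, ∑ p, Γ x j n p * Γ x p k n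

lemma mul_mem_ball {r : ℝ} {x : Fin m → ℝ} (hx : x ∈ Metric.ball (0 : Fin m → ℝ) r)
    (ξ : Cube m) : (fun a => (ξ a : ℝ) * x a) ∈ Metric.ball (0 : Fin m → ℝ) r := by
  rw [mem_ball_zero_iff] at hx ⊢
  have hr : 0 < r := (norm_nonneg x).trans_lt hx
  refine (pi_norm_lt_iff hr).2 fun a => ?_
  rw [norm_mul, Real.norm_eq_abs, abs_of_nonneg (ξ a).2.1]
  calc (ξ a : ℝ) * ‖x a‖ ≤ 1 * ‖x a‖ := mul_le_mul_of_nonneg_right (ξ a).2.2 (norm_nonneg _)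
    _ < r := by rw [one_mul]; exact (norm_le_pi_norm x a).trans_lt hx

lemma norm_sys_lt {R : ℝ} (hR : 0 < R) {y y' : Sys m} (hy : ‖y‖ < R)
    (h : ∀ j k l, ∃ j' k' l', ‖y' j k l‖ ≤ ‖y j' k' l'‖) : ‖y'‖ < R := by
  refine (pi_norm_lt_iff hR).2 fun j => (pi_norm_lt_iff hR).2 fun k =>
    (pi_norm_lt_iff hR).2 fun l => ?_
  obtain ⟨j', k', l', h'⟩ := h j k l
  exact h'.trans_lt (((norm_le_pi_norm _ l').trans ((norm_le_pi_norm _ k').trans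
    (norm_le_pi_norm y j'))).trans_lt hy)

section
variable {e : Fin m → Fin m → Fin m} {G : Fin m → Fin m → Fin m → Fin m → ℝ} {r R : ℝ}
  {Y : (Fin m → ℝ) → Sys m}

/-- By uniqueness, the solution with parameter `ξ x` is the restriction of the one with parameter
`x`. -/
lemma Y_mul (hR : 0 < R)
    (hsol : ∀ x ∈ Metric.ball 0 r, ‖Y x‖ < R ∧ Y x = Psi e G (x, Y x))
    (huniq : ∀ x ∈ Metric.ball 0 r, ∀ y, ‖y‖ < R → y = Psi e G (x, y) → y = Y x)
    {x : Fin m → ℝ} (hx : x ∈ Metric.ball 0 r) (ξ : Cube m) (j k l : Fin m) :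
    pull ξ (Y x j k l) = Y (fun a => ξ a * x a) j k l := by
  have := huniq _ (mul_mem_ball hx ξ) (fun j k l => pull ξ (Y x j k l))
    (norm_sys_lt hR (hsol x hx).1 fun j k l => ⟨j, k, l, norm_pull_le _ _⟩) (by
      funext j k l
      rw [← Psi_pull, ← (hsol x hx).2])
  exact congrFun (congrFun (congrFun this j) k) l

lemma Y_symm (hR : 0 < R) (he : ∀ j k, e j k = e k j) (hG : ∀ a j k l, G a j k l = G a k j l)
    (hsol : ∀ x ∈ Metric.ball 0 r, ‖Y x‖ < R ∧ Y x = Psi e G (x, Y x))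
    (huniq : ∀ x ∈ Metric.ball 0 r, ∀ y, ‖y‖ < R → y = Psi e G (x, y) → y = Y x)
    {x : Fin m → ℝ} (hx : x ∈ Metric.ball 0 r) (j k l : Fin m) : Y x k j l = Y x j k l := by
  have := huniq x hx (fun j k l => Y x k j l)
    (norm_sys_lt hR (hsol x hx).1 fun j k l => ⟨k, j, l, le_rfl⟩) (by
      funext j k l
      rw [← Psi_swap e he G hG, ← (hsol x hx).2])
  exact congrFun (congrFun (congrFun this j) k) l

/-- The rescaled symbols with parameter `x` are the symbols `conn G Y` on the box of corner `x`. -/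
lemma field_apply (hR : 0 < R)
    (hsol : ∀ x ∈ Metric.ball 0 r, ‖Y x‖ < R ∧ Y x = Psi e G (x, Y x))
    (huniq : ∀ x ∈ Metric.ball 0 r, ∀ y, ‖y‖ < R → y = Psi e G (x, y) → y = Y x)
    {x : Fin m → ℝ} (hx : x ∈ Metric.ball 0 r) (ξ : Cube m) (j k l : Fin m) :
    (lin G x + Y x) j k l ξ = conn G Y (fun a => ξ a * x a) j k l := by
  have h1 : ∀ f : Fn m, pull ξ f 1 = f ξ := by
    intro f
    change f (ξ * 1) = f ξ
    rw [mul_one]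
  unfold conn
  rw [← Y_mul hR hsol huniq hx, h1]
  change lin G x j k l ξ + _ = _
  congr 1
  simp only [lin, coord, ContinuousMap.sum_apply, ContinuousMap.smul_apply, smul_eq_mul,
    ContinuousMap.coe_mk]
  exact Finset.sum_congr rfl fun a _ => by ring

lemma shrink_one_mul (l : Fin m) {s : ℝ} (hs : s ∈ Set.Icc (0 : ℝ) 1) (x : Fin m → ℝ) :
    (fun a => (shrink l 1 s a : ℝ) * x a) = Function.update x l (s * x l) := by
  funext a
  by_cases h : a = l
  · subst h; simp [shrink, projIcc_of_mem _ hs]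
  · simp [shrink, h]

lemma Y_eq_integral (hR : 0 < R)
    (hsol : ∀ x ∈ Metric.ball 0 r, ‖Y x‖ < R ∧ Y x = Psi e G (x, Y x))
    (huniq : ∀ x ∈ Metric.ball 0 r, ∀ y, ‖y‖ < R → y = Psi e G (x, y) → y = Y x)
    {x : Fin m → ℝ} (hx : x ∈ Metric.ball 0 r) (j k : Fin m) :
    Y x j k (e j k) 1
      = ∫ t in (0 : ℝ)..x (e j k), Q (conn G Y) (Function.update x (e j k) t) j k := by
  rw [(hsol x hx).2]
  simp only [Psi, if_true, ContinuousMap.smul_apply, prim_apply, smul_eq_mul]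
  have h : ∀ s ∈ uIcc (0 : ℝ) 1, quad (lin G x + Y x) j k (shrink (e j k) 1 s)
      = Q (conn G Y) (Function.update x (e j k) (s * x (e j k))) j k := by
    intro s hs
    rw [uIcc_of_le zero_le_one] at hs
    simp only [quad, Q, ContinuousMap.sum_apply, ContinuousMap.mul_apply,
      field_apply hR hsol huniq hx, shrink_one_mul _ hs]
  rw [intervalIntegral.integral_congr h]
  have := intervalIntegral.mul_integral_comp_mul_right (a := 0) (b := 1)
    (f := fun t => Q (conn G Y) (Function.update x (e j k) t) j k) (x (e j k))
  simp only [zero_mul, one_mul] at this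
  simpa using this

lemma update_mem_ball {x : Fin m → ℝ} (hx : x ∈ Metric.ball (0 : Fin m → ℝ) r) (l : Fin m)
    {t : ℝ} (ht : |t| < r) : Function.update x l t ∈ Metric.ball (0 : Fin m → ℝ) r := by
  rw [mem_ball_zero_iff] at hx ⊢
  have hr : 0 < r := (norm_nonneg x).trans_lt hx
  refine (pi_norm_lt_iff hr).2 fun a => ?_
  by_cases h : a = l
  · subst h; simpa using ht
  · simpa [h] using (norm_le_pi_norm x a).trans_lt hx

/-- The differential equation: `∂_l Y_{jk}^l` is the quadratic term for `l = e j k`. -/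
lemma hasDerivAt_Y (hR : 0 < R) (hcont : ContinuousOn Y (Metric.ball 0 r))
    (hsol : ∀ x ∈ Metric.ball 0 r, ‖Y x‖ < R ∧ Y x = Psi e G (x, Y x))
    (huniq : ∀ x ∈ Metric.ball 0 r, ∀ y, ‖y‖ < R → y = Psi e G (x, y) → y = Y x)
    {x : Fin m → ℝ} (hx : x ∈ Metric.ball 0 r) (j k : Fin m) :
    HasDerivAt (fun t => Y (Function.update x (e j k) t) j k (e j k) 1)
      (Q (conn G Y) x j k) (x (e j k)) := by
  set l := e j k with hl
  have hxl : |x l| < r := by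
    rw [mem_ball_zero_iff] at hx
    exact (norm_le_pi_norm x l).trans_lt hx
  have hr : 0 < r := (abs_nonneg _).trans_lt hxl
  have hYc : ∀ j k l, ContinuousOn (fun x => Y x j k l 1) (Metric.ball 0 r) := by
    intro j k l
    have : Continuous fun y : Sys m => y j k l 1 := by fun_prop
    exact this.comp_continuousOn hcont
  have hQ : ContinuousOn (fun x => Q (conn G Y) x j k) (Metric.ball 0 r) := by
    unfold Q conn
    fun_prop
  have hopen : IsOpen (Metric.ball (0 : ℝ) r) := Metric.isOpen_ball
  have hq : ContinuousOn (fun t => Q (conn G Y) (Function.update x l t) j k)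
      (Metric.ball (0 : ℝ) r) := by
    refine hQ.comp (Continuous.continuousOn (by fun_prop)) fun t ht => ?_
    exact update_mem_ball hx l (by simpa using ht)
  have hxm : x l ∈ Metric.ball (0 : ℝ) r := by simpa using hxl
  have hsub : uIcc 0 (x l) ⊆ Metric.ball (0 : ℝ) r :=
    (convex_ball (0 : ℝ) r).ordConnected.uIcc_subset (Metric.mem_ball_self hr) hxm
  have hFTC := intervalIntegral.integral_hasDerivAt_right
    (hq.mono hsub).intervalIntegrable
    (hq.stronglyMeasurableAtFilter hopen (x l) hxm)
    (hq.continuousAt (hopen.mem_nhds hxm))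
  rw [Function.update_eq_self] at hFTC
  refine hFTC.congr_of_eventuallyEq ?_
  filter_upwards [hopen.mem_nhds hxm] with t ht
  rw [hl, Y_eq_integral hR hsol huniq (update_mem_ball hx _ (by simpa using ht))]
  simp [← hl]

end

/-! ### The prescribed linear part -/

/-- Coefficients of the linear Christoffel symbols `Γ_{jk}^l = ∑ a, x_a G_{ajk}^l`, with
`G_{ajk}^l = (A_{ajk}^l + A_{akj}^l) / 3`, whose curvature at the origin is `A`. -/
def linCoeff (A : Fin m → Fin m → Fin m → Fin m → ℝ) (a j k l : Fin m) : ℝ :=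
  (A a j k l + A a k j l) / 3

section
variable {A : Fin m → Fin m → Fin m → Fin m → ℝ}

lemma sum_linCoeff_div
    (hricci : ∀ i j, ricC A i j = 0) (j k : Fin m) : ∑ i, linCoeff A i j k i = 0 := by
  have h1 := hricci j k
  have h2 := hricci k j
  unfold ricC at h1 h2
  simp only [linCoeff]
  rw [← Finset.sum_div, Finset.sum_add_distrib, h1, h2]
  simp

lemma sum_linCoeff_trace (hanti : ∀ i j k l, A i j k l = - A j i k l)
    (hbianchi : ∀ i j k l, A i j k l + A j k i l + A k i j l = 0)
    (hricci : ∀ i j, ricC A i j = 0) (a k : Fin m) : ∑ i, linCoeff A a i k i = 0 := by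
  have h1 := hricci a k
  have h2 := hricci k a
  unfold ricC at h1 h2
  have h : ∀ i, linCoeff A a i k i = (-2 * A i a k i + A i k a i) / 3 := by
    intro i
    have := hbianchi a k i i
    rw [linCoeff]
    linarith [hanti a i k i, hanti k i a i]
  simp only [h]
  rw [← Finset.sum_div, Finset.sum_add_distrib, ← Finset.mul_sum, h1, h2]
  simp

lemma linCoeff_sub (hanti : ∀ i j k l, A i j k l = - A j i k l)
    (hbianchi : ∀ i j k l, A i j k l + A j k i l + A k i j l = 0) (i j k l : Fin m) :
    linCoeff A i j k l - linCoeff A j i k l = A i j k l := by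
  unfold linCoeff
  linarith [hanti i j k l, hanti i k j l, hbianchi i j k l]

end

/-- This is where `m ≥ 3` enters: to each unordered pair `{j, k}` one can assign an index
outside it. -/
lemma exists_index (hm : 3 ≤ m) :
    ∃ e : Fin m → Fin m → Fin m, (∀ j k, e j k = e k j) ∧ (∀ j k, e j k ≠ j) := by
  have h : ∀ s : Finset (Fin m), s.card ≤ 2 → ∃ i, i ∉ s := by
    intro s hs
    by_contra! hall
    have : s = Finset.univ := Finset.eq_univ_of_forall hall
    rw [this, Finset.card_univ, Fintype.card_fin] at hs
    omega
  have : Nonempty (Fin m) := ⟨⟨0, by omega⟩⟩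
  choose! f hf using h
  refine ⟨fun j k => f {j, k}, fun j k => congrArg f (Finset.pair_comm j k), fun j k hjk => ?_⟩
  apply hf {j, k} Finset.card_le_two
  rw [show f {j, k} = j from hjk]
  simp

/-- Evaluation of the component `(j, k, l)` at the corner `1` of the cube. -/
def evalOne (j k l : Fin m) : Sys m →L[ℝ] ℝ where
  toFun y := y j k l 1
  map_add' _ _ := rfl
  map_smul' _ _ := rfl
  cont := by fun_prop

lemma fderiv_conn {G : Fin m → Fin m → Fin m → Fin m → ℝ} {Y : (Fin m → ℝ) → Sys m}
    {x : Fin m → ℝ} (hY : DifferentiableAt ℝ Y x) (i j k l : Fin m) :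
    fderiv ℝ (fun x => conn G Y x j k l) x (Pi.single i 1)
      = G i j k l + fderiv ℝ Y x (Pi.single i 1) j k l 1 := by
  have h1 : HasFDerivAt (fun x => Y x j k l 1) ((evalOne j k l).comp (fderiv ℝ Y x)) x :=
    (evalOne j k l).hasFDerivAt.comp x hY.hasFDerivAt
  have h2 : HasFDerivAt (fun x : Fin m → ℝ => ∑ a, x a * G a j k l)
      (∑ a, G a j k l • ContinuousLinearMap.proj (R := ℝ) (φ := fun _ : Fin m => ℝ) a) x :=
    HasFDerivAt.fun_sum fun a _ =>
      (ContinuousLinearMap.hasFDerivAt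
        (ContinuousLinearMap.proj (R := ℝ) (φ := fun _ : Fin m => ℝ) a)).mul_const _
  have h3 := (h2.add h1).fderiv
  change fderiv ℝ ((fun x : Fin m → ℝ => ∑ a, x a * G a j k l) + fun x => Y x j k l 1) x
    (Pi.single i 1) = _
  rw [h3]
  simp [evalOne, Pi.single_apply]

end RicciFlat

open RicciFlat in
/-- **Theorem 1.4 (3).** A Ricci flat generalized algebraic curvature operator on ℝ^m
(m ≥ 3) is geometrically realizable by a torsion-free connection, defined on a neighborhood
of the origin, whose Ricci tensor vanishes identically on that neighborhood, and whose
curvature at the origin equals A. -/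
theorem ricci_flat_realization
    (m : ℕ) (hm : 3 ≤ m) (A : Fin m → Fin m → Fin m → Fin m → ℝ)
    (hanti : ∀ i j k l, A i j k l = - A j i k l)
    (hbianchi : ∀ i j k l, A i j k l + A j k i l + A k i j l = 0)
    (hricci : ∀ i j, ricC A i j = 0) :
    ∃ U : Set (Fin m → ℝ), IsOpen U ∧ (0 : Fin m → ℝ) ∈ U ∧
      ∃ Γ : (Fin m → ℝ) → Fin m → Fin m → Fin m → ℝ,
        (∀ i j k, ContDiffOn ℝ (⊤ : ℕ∞) (fun x => Γ x i j k) U) ∧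
        (∀ x ∈ U, ∀ i j k, Γ x i j k = Γ x j i k) ∧
        (∀ i j k l, curv Γ 0 i j k l = A i j k l) ∧
        (∀ P ∈ U, ∀ j k, ricC (curv Γ P) j k = 0) := by
  obtain ⟨e, he, hej⟩ := exists_index hm
  set G := linCoeff A with hGdef
  have hG : ∀ a j k l, G a j k l = G a k j l := fun a j k l => by
    simp only [hGdef, linCoeff, add_comm]
  obtain ⟨r, hr, R, hR, Y, hYs, hY0, hYd, hsol, huniq⟩ := exists_solution e G
  have hopen : IsOpen (Metric.ball (0 : Fin m → ℝ) r) := Metric.isOpen_ball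
  have hdiff : ∀ x ∈ Metric.ball (0 : Fin m → ℝ) r, DifferentiableAt ℝ Y x := fun x hx =>
    (hYs.differentiableOn (by simp)).differentiableAt (hopen.mem_nhds hx)
  have hYz : ∀ x ∈ Metric.ball (0 : Fin m → ℝ) r, ∀ j k l, l ≠ e j k → Y x j k l = 0 := by
    intro x hx j k l hl
    rw [(hsol x hx).2]
    simp [Psi, hl]
  have hΓd : ∀ x ∈ Metric.ball (0 : Fin m → ℝ) r, ∀ j k l,
      DifferentiableAt ℝ (fun x => conn G Y x j k l) x := by
    intro x hx j k l
    unfold conn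
    have h2 : DifferentiableAt ℝ (fun x => Y x j k l 1) x :=
      (evalOne j k l).differentiableAt.comp x (hdiff x hx)
    fun_prop
  -- The nonlinear part does not contribute to the trace, since `e i k ≠ i`.
  have htr : ∀ x ∈ Metric.ball (0 : Fin m → ℝ) r, ∀ k, ∑ i, conn G Y x i k i = 0 := by
    intro x hx k
    unfold conn
    rw [Finset.sum_add_distrib, Finset.sum_comm]
    have h1 : ∀ i, Y x i k i 1 = 0 := fun i => by
      rw [hYz x hx i k i (hej i k).symm]; rfl
    simp only [h1, ← Finset.mul_sum, hGdef, sum_linCoeff_trace hanti hbianchi hricci]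
    simp
  have hdivY : ∀ x ∈ Metric.ball (0 : Fin m → ℝ) r, ∀ i j k,
      fderiv ℝ Y x (Pi.single i 1) j k i 1 = if i = e j k then Q (conn G Y) x j k else 0 := by
    intro x hx i j k
    have h1 : HasDerivAt (fun t => Y (Function.update x i t)) (fderiv ℝ Y x (Pi.single i 1))
        (x i) := by
      have h2 := hdiff x hx
      have h3 : HasDerivAt (Function.update x i) (Pi.single i (1 : ℝ)) (x i) :=
        hasDerivAt_update x i (x i)
      have h4 : HasFDerivAt Y (fderiv ℝ Y x) (Function.update x i (x i)) := by
        rw [Function.update_eq_self]; exact h2.hasFDerivAt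
      exact h4.comp_hasDerivAt (x i) h3
    have h2 : HasDerivAt (fun t => Y (Function.update x i t) j k i 1)
        (fderiv ℝ Y x (Pi.single i 1) j k i 1) (x i) :=
      (evalOne j k i).hasFDerivAt.comp_hasDerivAt (x i) h1
    split_ifs with h
    · subst h
      exact h2.unique (hasDerivAt_Y hR hYs.continuousOn hsol huniq hx j k)
    · refine h2.unique ((hasDerivAt_const (x i) (0 : ℝ)).congr_of_eventuallyEq ?_)
      have hc : ContinuousAt (fun t => Function.update x i t) (x i) := by fun_prop
      filter_upwards [hc.eventually_mem (hopen.mem_nhds (by simpa using hx))] with t ht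
      rw [hYz _ ht j k i h]; rfl
  refine ⟨Metric.ball 0 r, hopen, Metric.mem_ball_self hr, conn G Y, ?_, ?_, ?_, ?_⟩
  · intro j k l
    have h1 : ContDiffOn ℝ (⊤ : ℕ∞) (fun x => Y x j k l 1) (Metric.ball 0 r) :=
      (evalOne j k l).contDiff.comp_contDiffOn hYs
    unfold conn
    fun_prop
  · intro x hx j k l
    simp only [conn, hG _ j k l, Y_symm hR he hG hsol huniq hx k j l]
  · intro i j k l
    have h0 : ∀ j k l, conn G Y 0 j k l = 0 := by
      intro j k l
      simp [conn, hY0]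
    unfold curv
    rw [fderiv_conn hYd.differentiableAt, fderiv_conn hYd.differentiableAt, hYd.fderiv]
    simp only [h0]
    simpa using linCoeff_sub hanti hbianchi i j k l
  · intro x hx j k
    have hdiv : ∑ i, fderiv ℝ (fun x => conn G Y x j k i) x (Pi.single i 1)
        = Q (conn G Y) x j k := by
      simp only [fderiv_conn (hdiff x hx), hdivY x hx]
      rw [Finset.sum_add_distrib, hGdef, sum_linCoeff_div hricci]
      simp
    have htrd : ∑ i, fderiv ℝ (fun x => conn G Y x i k i) x (Pi.single j 1) = 0 := by
      rw [← sum_apply, ← fderiv_fun_sum fun i _ => hΓd x hx i k i]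
      have : (fun x => ∑ i, conn G Y x i k i) =ᶠ[nhds x] fun _ => (0 : ℝ) := by
        filter_upwards [hopen.mem_nhds hx] with y hy
        exact htr y hy k
      rw [this.fderiv_eq]
      simp
    have hq1 : ∑ i, ∑ n, conn G Y x i n i * conn G Y x j k n = 0 := by
      rw [Finset.sum_comm]
      simp only [← Finset.sum_mul, htr x hx]
      simp
    have hq2 : ∑ i, ∑ n, conn G Y x j n i * conn G Y x i k n = Q (conn G Y) x j k := by
      rw [Finset.sum_comm]; rfl
    simp only [ricC, curv, Finset.sum_add_distrib, Finset.sum_sub_distrib]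
    rw [hdiv, htrd, hq1, hq2]
    ring
end
end

section
/- Let m ≥ 3 and let A ∈ 𝔄(ℝ^m) be any generalized algebraic curvature operator. Then there exists a real analytic torsion-free connection ∇ defined on an open neighborhood O of 0 ∈ ℝ^m such that the curvature of ∇ at 0 equals A, and such that the Ricci tensor of ∇ is constant on O: ρ(R^∇_P)(∂_{x_i},∂_{x_j}) = ρ(A)(e_i,e_j) for every point P ∈ O and all i,j. -/
/-!
The linear Christoffel symbols `⅓ (A_{ijk}{}^l + A_{ikj}{}^l) x_i` have curvature `A` at the origin,
and the part of their Ricci tensor linear in `Γ` is the constant `ρ(A)`; only the quadratic terms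
`Γ_{in}{}^i Γ_{jk}{}^n - Γ_{jn}{}^i Γ_{ik}{}^n` are in the way. Since `m ≥ 3`, for every pair `j, k` there
is an index `d j k = d k j` outside `{j, k}` (`exists_third`). Adding to the linear symbols a
correction `Θ_{jk}` in the slots `Γ_{jk}{}^{d j k}` alone does not affect the trace `Γ_{ik}{}^i`, so the
Ricci tensor stays equal to `ρ(A)` exactly when `∂_{d j k} Θ_{jk}` equals a polynomial in `x` and `Θ`,
without derivatives (`quadPoly`). This polynomial vanishes at the origin, so a solution vanishing on the
hyperplanes `x_{d j k} = 0` has zero 1-jet there and the curvature at the origin remains `A`.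

Such a system, with each unknown differentiated in one direction, is solved analytically in
`goursat`. For a point `x`, put `θ(t) = Θ(x·t)` for `t` in the cube `[0,1]^m`, with the coordinatewise
product `x·t`. In integrated form the system is an equation for `θ` in the Banach space of continuous
functions on the cube, depending polynomially on `(x, θ)`, and reducing to `θ = 0` at `x = 0`. The
analytic implicit function theorem provides `θ = ψ(x)` analytic in `x` near `0`, and `Θ(x) = ψ(x)(1)` is
the solution: local uniqueness gives `ψ(x)(t) = Θ(x·t)`, after which the fundamental theorem of
calculus applies.
-/

noncomputable section

/-! ### Integration over the cube -/

open MeasureTheory unitInterval in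
/-- Integration in the direction `d` on functions on the cube `[0,1]^m`:
`g ↦ (t ↦ ∫_0^{t_d} g(t_1, …, u, …, t_m) du)`, written after the substitution `u = s t_d` so that
the domain of integration does not depend on `t`. It has operator norm at most `1`. -/
def segInt {m : ℕ} (d : Fin m) : C(Fin m → I, ℝ) →L[ℝ] C(Fin m → I, ℝ) :=
  LinearMap.mkContinuous
    { toFun := fun g =>
        { toFun := fun t => (t d : ℝ) * ∫ s : I, g (Function.update t d (s * t d))
          continuous_toFun := by
            refine Continuous.mul (by fun_prop) ?_
            have : Continuous (Function.uncurry
                fun (t : Fin m → I) (s : I) => g (Function.update t d (s * t d))) := by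
              refine g.continuous.comp ?_
              refine Continuous.update continuous_fst d ?_
              fun_prop
            simpa using continuous_parametric_integral_of_continuous
              (μ := (volume : Measure I)) this isCompact_univ }
      map_add' := fun g h => by
        ext t
        have hc : ∀ g : C(Fin m → I, ℝ),
            Integrable (fun s : I => g (Function.update t d (s * t d))) := fun g =>
          (g.continuous.comp (by fun_prop)).integrable_of_hasCompactSupport
            (HasCompactSupport.of_compactSpace _)
        simp [integral_add (hc g) (hc h), mul_add]
      map_smul' := fun c g => by
        ext t
        simp [integral_const_mul]
        ring }
    1 (fun g => by
      rw [ContinuousMap.norm_le _ (by positivity)]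
      intro t
      have h1 : ‖∫ s : I, g (Function.update t d (s * t d))‖ ≤ ‖g‖ := by
        simpa using norm_integral_le_of_norm_le_const (μ := (volume : Measure I))
          (Filter.Eventually.of_forall fun s : I =>
            g.norm_coe_le_norm (Function.update t d (s * t d)))
      have h2 : ‖(t d : ℝ)‖ ≤ 1 := by
        rw [Real.norm_eq_abs, abs_of_nonneg (t d).2.1]; exact (t d).2.2
      simpa using mul_le_mul h2 h1 (norm_nonneg _) zero_le_one)

open unitInterval

lemma segInt_apply {m : ℕ} (d : Fin m) (g : C(Fin m → I, ℝ)) (t : Fin m → I) :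
    segInt d g t = (t d : ℝ) * ∫ s : I, g (Function.update t d (s * t d)) := rfl

/-- The `i`-th coordinate function on the cube `[0,1]^m`. -/
def cubeCoord {m : ℕ} (i : Fin m) : C(Fin m → I, ℝ) := ⟨fun t => (t i : ℝ), by fun_prop⟩

/-! ### The integral equation on the cube -/

/-- For `v = (x, θ)`, the function `t ↦ p(x·t, θ(t))` on the cube, where `x·t` is the coordinatewise
product. It is obtained by evaluating `p` in the Banach algebra `C([0,1]^m)`, which makes its analytic
dependence on `(x, θ)` immediate. -/
def rhsOn {m : ℕ} {ι : Type*} (p : MvPolynomial (Fin m ⊕ ι) ℝ)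
    (v : (Fin m → ℝ) × (ι → C(Fin m → I, ℝ))) : C(Fin m → I, ℝ) :=
  MvPolynomial.aeval (Sum.elim (fun i => v.1 i • cubeCoord i) v.2) p

lemma rhsOn_apply {m : ℕ} {ι : Type*} (p : MvPolynomial (Fin m ⊕ ι) ℝ)
    (v : (Fin m → ℝ) × (ι → C(Fin m → I, ℝ))) (t : Fin m → I) :
    rhsOn p v t =
      MvPolynomial.aeval (Sum.elim (fun i => v.1 i * (t i : ℝ)) (fun a => v.2 a t)) p := by
  have := MvPolynomial.comp_aeval_apply
    (Sum.elim (fun i => v.1 i • cubeCoord i) v.2) (ContinuousMap.evalAlgHom ℝ ℝ t) p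
  refine Eq.trans this ?_
  congr 2
  ext (i | a) <;> rfl

/-- The map whose zeros `(x, θ)` are the solutions of
`θ_a(t) = x_{d a} ∫_0^{t_{d a}} P_a(x·t, θ(t)) dt_{d a}`, the integral form of the system
`∂_{d a} f_a = P_a(x, f)` for the rescaled functions `θ_a(t) = f_a(x·t)`. -/
def goursatMap {m : ℕ} {ι : Type*} (d : ι → Fin m) (P : ι → MvPolynomial (Fin m ⊕ ι) ℝ)
    (v : (Fin m → ℝ) × (ι → C(Fin m → I, ℝ))) : ι → C(Fin m → I, ℝ) :=
  v.2 - fun a => v.1 (d a) • segInt (d a) (rhsOn (P a) v)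

lemma goursatMap_analyticAt {m : ℕ} {ι : Type*} [Fintype ι] (d : ι → Fin m)
    (P : ι → MvPolynomial (Fin m ⊕ ι) ℝ) (v : (Fin m → ℝ) × (ι → C(Fin m → I, ℝ))) :
    AnalyticAt ℝ (goursatMap d P) v := by
  have h1 : ∀ i, AnalyticAt ℝ (fun v : (Fin m → ℝ) × (ι → C(Fin m → I, ℝ)) => v.1 i) v :=
    fun i => ((ContinuousLinearMap.proj (R := ℝ) (φ := fun _ : Fin m => ℝ) i).comp
      (ContinuousLinearMap.fst ℝ _ _)).analyticAt v
  have h2 : ∀ a, AnalyticAt ℝ (fun v : (Fin m → ℝ) × (ι → C(Fin m → I, ℝ)) => v.2 a) v :=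
    fun a => ((ContinuousLinearMap.proj (R := ℝ) (φ := fun _ : ι => C(Fin m → I, ℝ)) a).comp
      (ContinuousLinearMap.snd ℝ _ _)).analyticAt v
  refine AnalyticAt.sub analyticAt_snd (AnalyticAt.pi fun a => (h1 _).smul ?_)
  refine (ContinuousLinearMap.analyticAt _ _).comp (AnalyticAt.aeval_mvPolynomial ?_ _)
  rintro (i | a)
  · exact (h1 i).smul analyticAt_const
  · exact h2 a

/-- Analytic implicit function theorem for `goursatMap` at the origin. It applies because
`goursatMap d P (0, θ) = θ`. Local uniqueness is recorded too, as it forces the solutions for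
different `x` to be compatible. -/
lemma exists_local_solution {m : ℕ} {ι : Type*} [Fintype ι] (d : ι → Fin m)
    (P : ι → MvPolynomial (Fin m ⊕ ι) ℝ) :
    ∃ ψ : (Fin m → ℝ) → ι → C(Fin m → I, ℝ), ∃ r > 0, ∃ ε > 0,
      AnalyticOnNhd ℝ ψ (Metric.ball 0 r) ∧
      (∀ x ∈ Metric.ball 0 r, ‖ψ x‖ < ε ∧ goursatMap d P (x, ψ x) = 0) ∧
      ∀ x ∈ Metric.ball 0 r, ∀ θ, ‖θ‖ < ε → goursatMap d P (x, θ) = 0 → ψ x = θ := by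
  have han := goursatMap_analyticAt d P 0
  have cdf : ContDiffAt ℝ (⊤ : WithTop ℕ∞) (goursatMap d P) 0 := han.contDiffAt
  have hinr : (fderiv ℝ (goursatMap d P) 0 ∘L .inr ℝ (Fin m → ℝ) (ι → C(Fin m → I, ℝ)))
      = ContinuousLinearMap.id ℝ _ := by
    have h1 : HasFDerivAt (goursatMap d P) (fderiv ℝ (goursatMap d P) 0)
        (ContinuousLinearMap.inr ℝ (Fin m → ℝ) (ι → C(Fin m → I, ℝ)) 0) := by
      rw [map_zero]; exact han.differentiableAt.hasFDerivAt
    have h2 := h1.comp 0 (ContinuousLinearMap.hasFDerivAt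
      (ContinuousLinearMap.inr ℝ (Fin m → ℝ) (ι → C(Fin m → I, ℝ))))
    have h3 : goursatMap d P ∘ (ContinuousLinearMap.inr ℝ (Fin m → ℝ) (ι → C(Fin m → I, ℝ)))
        = id := by
      ext θ a t
      simp [goursatMap]
    rw [h3] at h2
    exact h2.unique (hasFDerivAt_id _)
  have hinv : (fderiv ℝ (goursatMap d P) 0 ∘L
      .inr ℝ (Fin m → ℝ) (ι → C(Fin m → I, ℝ))).IsInvertible := by
    rw [hinr]; exact ⟨ContinuousLinearEquiv.refl ℝ _, rfl⟩
  have hn : (⊤ : WithTop ℕ∞) ≠ 0 := by simp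
  have h0 : goursatMap d P 0 = 0 := by ext a t; simp [goursatMap]
  set ψ := cdf.implicitFunction hn hinv with hψ
  have e1 : ∀ᶠ x in nhds (0 : Fin m → ℝ), AnalyticAt ℝ ψ x :=
    (cdf.contDiffAt_implicitFunction hn hinv).analyticAt.eventually_analyticAt
  have e2 := cdf.eventually_apply_implicitFunction hn hinv
  have e3 := cdf.eventually_apply_eq_iff_implicitFunction hn hinv
  have hψ0 : ψ 0 = 0 := cdf.implicitFunction_apply_self hn hinv
  rw [← hψ, h0] at e2 e3
  obtain ⟨δ, hδ, h3⟩ := Metric.eventually_nhds_iff_ball.1 e3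
  have e4 : ∀ᶠ x in nhds (0 : Fin m → ℝ), ψ x ∈ Metric.ball 0 δ :=
    e1.self_of_nhds.continuousAt.eventually_mem (by rw [hψ0]; exact Metric.ball_mem_nhds _ hδ)
  obtain ⟨r, hr, h4⟩ := Metric.eventually_nhds_iff_ball.1 (e1.and (e2.and e4))
  refine ⟨ψ, min r δ, lt_min hr hδ, δ, hδ, ?_, ?_, ?_⟩
  · intro x hx
    exact (h4 x (Metric.ball_subset_ball (min_le_left _ _) hx)).1
  · intro x hx
    obtain ⟨-, h, h'⟩ := h4 x (Metric.ball_subset_ball (min_le_left _ _) hx)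
    exact ⟨by simpa using h', h⟩
  · intro x hx θ hθ h
    refine (h3 (x, θ) ?_).1 h
    have hx' := Metric.ball_subset_ball (min_le_right _ _) hx
    rw [mem_ball_zero_iff] at hx' ⊢
    exact max_lt hx' hθ

/-! ### The Goursat system -/

/-- The system `∂_{d a} f_a = P_a(x, f)`, each unknown being differentiated in one direction only,
has an analytic solution near the origin with `f_a = 0` on the hyperplane `x_{d a} = 0`. -/
lemma goursat {m : ℕ} {ι : Type*} [Fintype ι] (d : ι → Fin m)
    (P : ι → MvPolynomial (Fin m ⊕ ι) ℝ) :
    ∃ r > 0, ∃ f : (Fin m → ℝ) → ι → ℝ, AnalyticOnNhd ℝ f (Metric.ball 0 r) ∧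
      (∀ x ∈ Metric.ball 0 r, ∀ a, x (d a) = 0 → f x a = 0) ∧
      ∀ x ∈ Metric.ball 0 r, ∀ a, fderiv ℝ (fun y => f y a) x (Pi.single (d a) 1)
        = MvPolynomial.aeval (Sum.elim x (f x)) (P a) := by
  obtain ⟨ψ, r, hr, ε, hε, han, hsol, huniq⟩ := exists_local_solution d P
  have hpt : ∀ x θ, goursatMap d P (x, θ) = 0 ↔ ∀ a t, θ a t = x (d a) * (t (d a) *
      ∫ s : I, rhsOn (P a) (x, θ) (Function.update t (d a) (s * t (d a)))) := by
    intro x θ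
    simp only [goursatMap, sub_eq_zero, funext_iff, ContinuousMap.ext_iff]
    rfl
  -- Compatibility `θ_{x·t}(1) = θ_x(t)`: the function `s ↦ θ_x(t·s)` solves the equation with
  -- parameter `x·t`, so uniqueness applies.
  have hcons : ∀ x ∈ Metric.ball 0 r, ∀ (t : Fin m → I) a,
      ψ (fun i => x i * t i) a 1 = ψ x a t := by
    intro x hx t a
    have hxt : (fun i => x i * (t i : ℝ)) ∈ Metric.ball (0 : Fin m → ℝ) r := by
      rw [mem_ball_zero_iff] at hx ⊢
      refine lt_of_le_of_lt ?_ hx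
      refine (pi_norm_le_iff_of_nonneg (norm_nonneg _)).2 fun i => ?_
      rw [norm_mul]
      have h2 : ‖(t i : ℝ)‖ ≤ 1 := by
        rw [Real.norm_eq_abs, abs_of_nonneg (t i).2.1]; exact (t i).2.2
      nlinarith [norm_le_pi_norm x i, norm_nonneg (x i)]
    let τ : C(Fin m → I, Fin m → I) := ⟨fun s => t * s, by fun_prop⟩
    have hnorm : ‖fun a => (ψ x a).comp τ‖ < ε := by
      refine lt_of_le_of_lt ?_ (hsol x hx).1
      refine (pi_norm_le_iff_of_nonneg (norm_nonneg _)).2 fun a => ?_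
      refine (ContinuousMap.norm_le _ (norm_nonneg _)).2 fun s => ?_
      exact ((ψ x a).norm_coe_le_norm _).trans (norm_le_pi_norm (ψ x) a)
    have := huniq _ hxt (fun a => (ψ x a).comp τ) hnorm ?_
    · rw [this]; simp [τ]
    · rw [hpt]
      intro a s
      have := (hpt x (ψ x)).1 (hsol x hx).2 a (t * s)
      simp only [ContinuousMap.comp_apply]
      refine this.trans ?_
      simp only [Pi.mul_apply, Set.Icc.coe_mul]
      rw [mul_assoc, mul_assoc]
      congr 3
      refine congrArg _ (funext fun u => ?_)
      have hup : Function.update (t * s) (d a) (u * (t (d a) * s (d a)))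
          = t * Function.update s (d a) (u * s (d a)) := by
        ext i
        by_cases h : i = d a
        · subst h; simp; ring
        · simp [h]
      rw [hup, rhsOn_apply, rhsOn_apply]
      congr 2
      ext (i | b)
      · simp; ring
      · rfl
  let f : (Fin m → ℝ) → ι → ℝ := fun x a => ψ x a 1
  have hfan : AnalyticOnNhd ℝ f (Metric.ball 0 r) := by
    intro x hx
    refine AnalyticAt.pi fun a => ?_
    exact (((ContinuousMap.evalCLM ℝ (1 : Fin m → I)).comp
      (ContinuousLinearMap.proj (R := ℝ) (φ := fun _ : ι => C(Fin m → I, ℝ)) a)).analyticAt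
        (ψ x)).comp (han x hx)
  have hf : ∀ x ∈ Metric.ball 0 r, ∀ a, f x a = x (d a) * ∫ s : I, MvPolynomial.aeval
      (Sum.elim (Function.update x (d a) (s * x (d a)))
        (f (Function.update x (d a) (s * x (d a))))) (P a) := by
    intro x hx a
    have := (hpt x (ψ x)).1 (hsol x hx).2 a 1
    refine this.trans ?_
    simp only [Pi.one_apply, Set.Icc.coe_one, one_mul, mul_one]
    congr 2
    ext s
    rw [rhsOn_apply]
    have hup : (fun i => x i * (Function.update (1 : Fin m → I) (d a) s i : ℝ))
        = Function.update x (d a) (s * x (d a)) := by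
      ext i
      by_cases h : i = d a
      · subst h; simp; ring
      · simp [h]
    rw [← hup]
    congr 2
    ext (i | b)
    · rfl
    · exact (hcons x hx _ b).symm
  refine ⟨r, hr, f, hfan, ?_, ?_⟩
  · intro x hx a h
    rw [hf x hx a, h, zero_mul]
  · intro x hx a
    have hupd : ∀ y ∈ Metric.ball (0 : ℝ) r, Function.update x (d a) y ∈ Metric.ball 0 r := by
      intro y hy
      rw [mem_ball_zero_iff] at hx hy ⊢
      refine (pi_norm_lt_iff hr).2 fun i => ?_
      by_cases h : i = d a
      · subst h; simpa using hy
      · simpa [h] using (norm_le_pi_norm x i).trans_lt hx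
    have hxd : x (d a) ∈ Metric.ball (0 : ℝ) r := by
      rw [mem_ball_zero_iff] at hx ⊢
      exact (norm_le_pi_norm x _).trans_lt hx
    let h : ℝ → ℝ := fun y => MvPolynomial.aeval
      (Sum.elim (Function.update x (d a) y) (f (Function.update x (d a) y))) (P a)
    have hcont : ContinuousOn h (Metric.ball 0 r) := by
      have hu : Continuous fun y : ℝ => Function.update x (d a) y := by fun_prop
      have hfc : ContinuousOn (fun y => f (Function.update x (d a) y)) (Metric.ball 0 r) :=
        hfan.continuousOn.comp hu.continuousOn hupd
      refine (MvPolynomial.continuous_eval (P a)).comp_continuousOn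
        (continuousOn_pi.2 ?_)
      rintro (i | b)
      · exact ((continuous_apply i).comp hu).continuousOn
      · exact continuousOn_pi.1 hfc b
    -- Undoing the substitution `u = s y` gives an integral with variable upper limit, to which the
    -- fundamental theorem of calculus applies.
    have hint : ∀ y ∈ Metric.ball (0 : ℝ) r,
        f (Function.update x (d a) y) a = ∫ s in (0 : ℝ)..y, h s := by
      intro y hy
      rw [hf _ (hupd y hy) a]
      simp only [Function.update_idem, Function.update_self]
      have := intervalIntegral.mul_integral_comp_mul_right (a := 0) (b := 1) (f := h) y
      rw [zero_mul, one_mul] at this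
      rw [← this, intervalIntegral.integral_of_le zero_le_one,
        ← MeasureTheory.integral_Icc_eq_integral_Ioc]
      congr 1
      exact MeasureTheory.integral_subtype measurableSet_Icc (fun s : ℝ => h (s * y))
    have hopen : Metric.ball (0 : ℝ) r ∈ nhds (x (d a)) := Metric.isOpen_ball.mem_nhds hxd
    have hsub : Set.uIcc 0 (x (d a)) ⊆ Metric.ball (0 : ℝ) r :=
      (convex_ball (0 : ℝ) r).ordConnected.uIcc_subset (Metric.mem_ball_self hr) hxd
    have hd1 : HasDerivAt (fun y => f (Function.update x (d a) y) a) (h (x (d a))) (x (d a)) := by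
      refine (intervalIntegral.integral_hasDerivAt_right (hcont.mono hsub).intervalIntegrable
        (hcont.stronglyMeasurableAtFilter Metric.isOpen_ball _ hxd)
        (hcont.continuousAt hopen)).congr_of_eventuallyEq ?_
      filter_upwards [hopen] with y hy using hint y hy
    have hd2 : HasDerivAt (fun y => f (Function.update x (d a) y) a)
        (fderiv ℝ (fun y => f y a) x (Pi.single (d a) 1)) (x (d a)) := by
      have h1 : HasFDerivAt (fun y => f y a) (fderiv ℝ (fun y => f y a) x)
          (Function.update x (d a) (x (d a))) := by
        rw [Function.update_eq_self]
        exact (((ContinuousLinearMap.proj (R := ℝ) (φ := fun _ : ι => ℝ) a).analyticAt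
          (f x)).comp (hfan x hx)).differentiableAt.hasFDerivAt
      exact h1.comp_hasDerivAt _ (hasDerivAt_update x (d a) (x (d a)))
    rw [hd2.unique hd1]
    simp [h]

/-! ### The connection -/

/-- The Christoffel symbol `Γ_{jk}{}^l` as a polynomial in the coordinates `x` and in unknown
functions `y_{jk}`: the linear term `⅓ (A_{ijk}{}^l + A_{ikj}{}^l) x_i`, whose curvature at the
origin is `A`, plus the symmetrized unknown `½ (y_{jk} + y_{kj})` in the single upper slot
`l = d j k`. -/
def chr {m : ℕ} (A : Fin m → Fin m → Fin m → Fin m → ℝ) (d : Fin m → Fin m → Fin m)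
    (j k l : Fin m) : MvPolynomial (Fin m ⊕ (Fin m × Fin m)) ℝ :=
  ∑ i, MvPolynomial.C ((A i j k l + A i k j l) / 3) * MvPolynomial.X (Sum.inl i)
    + if l = d j k then MvPolynomial.C (1 / 2)
        * (MvPolynomial.X (Sum.inr (j, k)) + MvPolynomial.X (Sum.inr (k, j))) else 0

/-- The quadratic expression `Γ_{jn}{}^i Γ_{ik}{}^n - Γ_{in}{}^i Γ_{jk}{}^n`, which is
minus the derivative-free part of the Ricci tensor, as a polynomial in the coordinates and the unknowns. -/
def quadPoly {m : ℕ} (A : Fin m → Fin m → Fin m → Fin m → ℝ) (d : Fin m → Fin m → Fin m)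
    (j k : Fin m) : MvPolynomial (Fin m ⊕ (Fin m × Fin m)) ℝ :=
  ∑ i, ∑ n, (chr A d j n i * chr A d i k n - chr A d i n i * chr A d j k n)

lemma aeval_chr {m : ℕ} (A : Fin m → Fin m → Fin m → Fin m → ℝ) (d : Fin m → Fin m → Fin m)
    (x : Fin m → ℝ) (y : Fin m × Fin m → ℝ) (j k l : Fin m) :
    MvPolynomial.aeval (Sum.elim x y) (chr A d j k l)
      = ∑ i, (A i j k l + A i k j l) / 3 * x i
        + if l = d j k then 1 / 2 * (y (j, k) + y (k, j)) else 0 := by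
  unfold chr
  split_ifs <;> simp

/-- The only use of `m ≥ 3`: to each pair `j, k` one can attach, symmetrically, an index different
from both. -/
lemma exists_third {m : ℕ} (hm : 3 ≤ m) :
    ∃ d : Fin m → Fin m → Fin m, (∀ j k, d j k = d k j) ∧ ∀ j k, d j k ≠ j ∧ d j k ≠ k := by
  have h : ∀ j k : Fin m, ∃ l, l ≠ j ∧ l ≠ k := by
    intro j k
    obtain ⟨l, hl⟩ : ∃ l, l ∉ ({j, k} : Finset (Fin m)) := by
      by_contra! hc
      have := Finset.card_le_two (a := j) (b := k)
      rw [Finset.eq_univ_iff_forall.2 hc, Finset.card_univ, Fintype.card_fin] at this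
      omega
    exact ⟨l, by simpa using hl⟩
  choose e he using h
  refine ⟨fun j k => e (min j k) (max j k), fun j k => by simp only [min_comm, max_comm], fun j k => ?_⟩
  have := he (min j k) (max j k)
  rcases le_total j k with h | h <;> simp_all

/-- **Theorem 4.1.** For any generalized algebraic curvature operator `A` on `ℝ^m` (`m ≥ 3`)
there is a real analytic torsion-free connection `∇`, defined on an open neighborhood `O` of
the origin, whose curvature at the origin equals `A` and whose Ricci tensor is constant on
`O`: `ρ(R^∇_P)(∂_{x_i},∂_{x_j}) = ρ(A)(e_i,e_j)` for every `P ∈ O`. -/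
theorem analytic_realization_with_constant_ricci
    (m : ℕ) (hm : 3 ≤ m) (A : Fin m → Fin m → Fin m → Fin m → ℝ)
    (hanti : ∀ i j k l, A i j k l = - A j i k l)
    (hbianchi : ∀ i j k l, A i j k l + A j k i l + A k i j l = 0) :
    ∃ U : Set (Fin m → ℝ), IsOpen U ∧ (0 : Fin m → ℝ) ∈ U ∧
      ∃ Γ : (Fin m → ℝ) → Fin m → Fin m → Fin m → ℝ,
        (∀ i j k, AnalyticOnNhd ℝ (fun x => Γ x i j k) U) ∧
        (∀ x ∈ U, ∀ i j k, Γ x i j k = Γ x j i k) ∧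
        (∀ i j k l, curv Γ 0 i j k l = A i j k l) ∧
        (∀ P ∈ U, ∀ i j, ricC (curv Γ P) i j = ricC A i j) := by
  obtain ⟨d, hdsymm, hd⟩ := exists_third hm
  obtain ⟨r, hr, f, hfan, hfzero, hfder⟩ :=
    goursat (fun a : Fin m × Fin m => d a.1 a.2) (fun a => quadPoly A d a.1 a.2)
  have h0 : (0 : Fin m → ℝ) ∈ Metric.ball 0 r := Metric.mem_ball_self hr
  obtain ⟨Γ, hΓdef⟩ : ∃ Γ : (Fin m → ℝ) → Fin m → Fin m → Fin m → ℝ, ∀ x j k l,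
      Γ x j k l = MvPolynomial.aeval (Sum.elim x (f x)) (chr A d j k l) := ⟨_, fun _ _ _ _ => rfl⟩
  have hΓ : ∀ x j k l, Γ x j k l = ∑ i, (A i j k l + A i k j l) / 3 * x i
      + if l = d j k then 1 / 2 * (f x (j, k) + f x (k, j)) else 0 :=
    fun x j k l => (hΓdef x j k l).trans (aeval_chr A d x (f x) j k l)
  have hsymm : ∀ x j k l, Γ x j k l = Γ x k j l := by
    intro x j k l
    simp only [hΓ, hdsymm k j, add_comm (f x (k, j)), add_comm (A _ k j l)]
  have hfa : ∀ a, ∀ x ∈ Metric.ball 0 r, AnalyticAt ℝ (fun y => f y a) x := fun a x hx =>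
    ((ContinuousLinearMap.proj (R := ℝ) (φ := fun _ : Fin m × Fin m => ℝ) a).analyticAt
      (f x)).comp (hfan x hx)
  have hΓan : ∀ j k l, AnalyticOnNhd ℝ (fun x => Γ x j k l) (Metric.ball 0 r) := by
    intro j k l x hx
    simp only [hΓdef]
    refine AnalyticAt.aeval_mvPolynomial ?_ _
    rintro (i | a)
    · exact (ContinuousLinearMap.proj (R := ℝ) (φ := fun _ : Fin m => ℝ) i).analyticAt x
    · exact hfa a x hx
  have hΓder : ∀ x ∈ Metric.ball 0 r, ∀ i j k l,
      fderiv ℝ (fun y => Γ y j k l) x (Pi.single i 1) = (A i j k l + A i k j l) / 3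
        + if l = d j k then 1 / 2 * (fderiv ℝ (fun y => f y (j, k)) x (Pi.single i 1)
            + fderiv ℝ (fun y => f y (k, j)) x (Pi.single i 1)) else 0 := by
    intro x hx i j k l
    have hL : HasFDerivAt (fun y : Fin m → ℝ => ∑ i, (A i j k l + A i k j l) / 3 * y i)
        (∑ i, ((A i j k l + A i k j l) / 3) •
          ContinuousLinearMap.proj (R := ℝ) (φ := fun _ : Fin m => ℝ) i) x :=
      HasFDerivAt.fun_sum fun i _ => (hasFDerivAt_apply i x).const_mul _
    simp only [hΓ]
    have hLi : (∑ i, ((A i j k l + A i k j l) / 3) •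
          ContinuousLinearMap.proj (R := ℝ) (φ := fun _ : Fin m => ℝ) i) (Pi.single i 1)
        = (A i j k l + A i k j l) / 3 := by
      simp [Pi.single_apply]
    split_ifs with hl
    · have h1 := (hfa (j, k) x hx).differentiableAt.hasFDerivAt
      have h2 := (hfa (k, j) x hx).differentiableAt.hasFDerivAt
      rw [(hL.fun_add ((h1.fun_add h2).const_mul (1 / 2))).fderiv,
        add_apply, hLi]
      simp [mul_add]
    · rw [(hL.fun_add (hasFDerivAt_const (0 : ℝ) x)).fderiv, add_apply, hLi]
      simp
  have hf0 : f 0 = 0 := by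
    ext a
    exact hfzero 0 h0 a rfl
  have hΓ0 : ∀ j k l, Γ 0 j k l = 0 := by
    intro j k l
    simp [hΓ, hf0]
  have hquad : ∀ x j k, MvPolynomial.aeval (Sum.elim x (f x)) (quadPoly A d j k)
      = ∑ i, ∑ n, (Γ x j n i * Γ x i k n - Γ x i n i * Γ x j k n) := by
    intro x j k
    simp only [quadPoly, map_sum, map_sub, map_mul, hΓdef]
  -- The quadratic term is symmetric because the connection is torsion-free; hence symmetrizing the
  -- unknowns does not change the equation they solve.
  have hquadsymm : ∀ x j k, ∑ i, ∑ n, (Γ x j n i * Γ x i k n - Γ x i n i * Γ x j k n)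
      = ∑ i, ∑ n, (Γ x k n i * Γ x i j n - Γ x i n i * Γ x k j n) := by
    intro x j k
    simp only [Finset.sum_sub_distrib]
    congr 1
    · rw [Finset.sum_comm]
      refine Finset.sum_congr rfl fun n _ => Finset.sum_congr rfl fun i _ => ?_
      rw [hsymm x j n, hsymm x i k]
      ring
    · simp only [hsymm x j k]
  -- The correction has zero 1-jet at the origin: the derivative in direction `d j k` is the
  -- quadratic term, and along the other axes the correction vanishes identically.
  have hder0 : ∀ a i, fderiv ℝ (fun y => f y a) 0 (Pi.single i 1) = 0 := by
    intro a i
    by_cases hi : i = d a.1 a.2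
    · rw [hi, hfder 0 h0 a, hquad]
      simp [hΓ0]
    · have hupd0 : Function.update (0 : Fin m → ℝ) i 0 = 0 := Function.update_eq_self i 0
      have h1 : HasFDerivAt (fun y => f y a) (fderiv ℝ (fun y => f y a) 0)
          (Function.update (0 : Fin m → ℝ) i 0) := by
        rw [hupd0]
        exact (hfa a 0 h0).differentiableAt.hasFDerivAt
      have h2 := h1.comp_hasDerivAt 0 (hasDerivAt_update (0 : Fin m → ℝ) i 0)
      refine h2.unique ((hasDerivAt_const (0 : ℝ) (0 : ℝ)).congr_of_eventuallyEq ?_)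
      have hu : Continuous fun y : ℝ => Function.update (0 : Fin m → ℝ) i y := by fun_prop
      have hmem := hu.continuousAt.eventually_mem (x := (0 : ℝ)) (s := Metric.ball 0 r) (by
        rw [hupd0]; exact Metric.ball_mem_nhds _ hr)
      filter_upwards [hmem] with y hy
      refine hfzero _ hy a ?_
      simp [Function.update_of_ne (Ne.symm hi)]
  refine ⟨Metric.ball 0 r, Metric.isOpen_ball, h0, Γ, hΓan, fun x _ => hsymm x, ?_, ?_⟩
  · intro i j k l
    simp only [curv, hΓder 0 h0, hder0, hΓ0]
    simp
    linarith [hanti i k j l, hanti j i k l, hbianchi i j k l]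
  · intro x hx j k
    have h1 := hfder x hx (j, k)
    have h2 := hfder x hx (k, j)
    simp only [hquad] at h1 h2
    rw [← hquadsymm x j k, hdsymm k j] at h2
    -- The correction `Γ_{jk}{}^{d j k}` never has `d j k ∈ {j, k}`, so it does not enter the trace
    -- `Γ_{ik}{}^i`.
    have h3 : ∀ i, ¬ i = d i k := fun i h => (hd i k).1 h.symm
    have hlin : ∀ i, (A i j k i + A i k j i) / 3 - (A j i k i + A j k i i) / 3 = A i j k i := by
      intro i
      linarith [hanti i k j i, hanti j i k i, hbianchi i j k i]
    simp only [ricC, curv, hΓder x hx, if_neg (h3 _), add_zero]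
    have hdiv : ∑ i, (if i = d j k then 1 / 2 * (fderiv ℝ (fun y => f y (j, k)) x (Pi.single i 1)
            + fderiv ℝ (fun y => f y (k, j)) x (Pi.single i 1)) else 0)
        = ∑ i, ∑ n, (Γ x j n i * Γ x i k n - Γ x i n i * Γ x j k n) := by
      rw [Finset.sum_ite_eq' Finset.univ (d j k), if_pos (Finset.mem_univ _), h1, h2]
      ring
    have hq : ∑ i, ∑ n, (Γ x i n i * Γ x j k n - Γ x j n i * Γ x i k n)
        = - ∑ i, ∑ n, (Γ x j n i * Γ x i k n - Γ x i n i * Γ x j k n) := by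
      simp only [← Finset.sum_neg_distrib, neg_sub]
    calc _ = ∑ i, ((A i j k i + A i k j i) / 3 - (A j i k i + A j k i i) / 3)
          + ∑ i, (if i = d j k then 1 / 2 * (fderiv ℝ (fun y => f y (j, k)) x (Pi.single i 1)
            + fderiv ℝ (fun y => f y (k, j)) x (Pi.single i 1)) else 0)
          + ∑ i, ∑ n, (Γ x i n i * Γ x j k n - Γ x j n i * Γ x i k n) := by
          rw [← Finset.sum_add_distrib, ← Finset.sum_add_distrib]
          refine Finset.sum_congr rfl fun i _ => ?_
          ring
      _ = ∑ i, A i j k i := by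
          rw [hdiv, hq, add_neg_cancel_right]
          exact Finset.sum_congr rfl fun i _ => hlin i
end
end
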